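/- arXiv:1604.01762 — 6 statements merged into one kernel-verified Lean document; each statement's English description precedes it below -/
import Mathlib

section
/- Let v₁, v₂, ..., v₅ ∈ ℝ³ be 3-independent (every three of them linearly independent). Let F : ℝ³ → ℝ³ be an injective mapping that maps each line in ℒ(v₁, ..., v₅) onto a line. Then F is affine-additive. Moreover, there exist a basis u₁, u₂, u₃ of ℝ³, a basis w₁, w₂, w₃ of ℝ³, and additive bijections f₁, f₂, f₃ : ℝ → ℝ with fᵢ(1) = 1, such that for every x = Σᵢ αᵢuᵢ one has F(x) − F(0) = Σᵢ fᵢ(αᵢ)wᵢ. -/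
/-- The line through `a` in direction `b`. -/
def lineThru {k : ℕ} (a b : Fin k → ℝ) : Set (Fin k → ℝ) :=
  {x | ∃ t : ℝ, x = a + t • b}

/-- A subset of `ℝᵏ` is a line if it is of the form `a + ℝ b` with `b ≠ 0`. -/
def IsLine {k : ℕ} (s : Set (Fin k → ℝ)) : Prop :=
  ∃ a b : Fin k → ℝ, b ≠ 0 ∧ s = lineThru a b

/-!
On every line parallel to one of the directions, `F` is affine up to a bijection of the scalar
field. In a grid spanned by two directions the images of parallel lines are disjoint, which forces
this bijection to be the same for all parallel lines; it is then additive.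

Take the first three directions as coordinate axes, scaled so that the fourth is `(1, 1, 1)`. In the
transformed coordinates `F` is a polynomial of degree at most one in each variable. The fourth
direction kills the cubic term and makes the three coordinate bijections equal. The fifth forces the
quadratic part to have the form `c • w` with a fixed vector `w` and a nondegenerate quadratic form
`c`, which is incompatible with injectivity unless `w = 0`. So `F` is affine in the transformed
coordinates.
-/

open Module Submodule

section Lines

variable {K V W : Type*} [Field K] [AddCommGroup V] [Module K V] [AddCommGroup W] [Module K W]

variable (K) in
/-- `F` maps every line parallel to `b` onto a line. -/
def MapsLinesOnto (F : V → W) (b : V) : Prop :=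
  ∀ a, ∃ c d : W, d ≠ 0 ∧ F '' {x | ∃ t : K, x = a + t • b} = {y | ∃ s : K, y = c + s • d}

/-- `f` is the affine coordinate of the points `g t` of a line, in which `g 0` has coordinate `0`
and `g 1` has coordinate `1`. -/
structure IsAffineCoordinate (f : Equiv.Perm K) (g : K → W) : Prop where
  map_zero : f 0 = 0
  map_one : f 1 = 1
  apply_eq (t : K) : g t = g 0 + f t • (g 1 - g 0)

theorem exists_isAffineCoordinate_of_range_eq {g : K → W} (hg : g.Injective) {c d : W} (hd : d ≠ 0)
    (hline : Set.range g = {y | ∃ s : K, y = c + s • d}) :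
    ∃ f, IsAffineCoordinate f g := by
  have exists_apply_eq (t : K) : ∃ s : K, g t = c + s • d := hline.le ⟨t, rfl⟩
  choose k hk using exists_apply_eq
  have hk_inj : k.Injective := fun s t hst => hg (by rw [hk, hk, hst])
  have hk_bij : k.Bijective := ⟨hk_inj, fun s => by
    obtain ⟨t, ht⟩ := hline.ge ⟨s, rfl⟩
    exact ⟨t, smul_left_injective K hd (add_left_cancel ((hk t).symm.trans ht))⟩⟩
  have hk_ne : k 1 - k 0 ≠ 0 := sub_ne_zero.2 (hk_inj.ne one_ne_zero)
  refine ⟨(Equiv.ofBijective k hk_bij).trans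
    ((Equiv.subRight (k 0)).trans (Equiv.divRight₀ _ hk_ne)), by simp, by simp [hk_ne], fun t => ?_⟩
  have hdiff : g 1 - g 0 = (k 1 - k 0) • d := by rw [hk, hk]; module
  have hcoord : (k t - k 0) / (k 1 - k 0) * (k 1 - k 0) = k t - k 0 := div_mul_cancel₀ _ hk_ne
  simp only [Equiv.trans_apply, Equiv.ofBijective_apply, Equiv.subRight_apply,
    Equiv.divRight₀_apply]
  rw [hdiff, smul_smul, hcoord, hk, hk 0]
  module

theorem MapsLinesOnto.exists_isAffineCoordinate {F : V → W} {b : V} (h : MapsLinesOnto K F b)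
    (hF : F.Injective) (hb : b ≠ 0) (a : V) :
    ∃ f : Equiv.Perm K, IsAffineCoordinate f fun t : K => F (a + t • b) := by
  obtain ⟨c, d, hd, hline⟩ := h a
  refine exists_isAffineCoordinate_of_range_eq
    (hF.comp ((add_right_injective a).comp (smul_left_injective K hb))) hd (Eq.trans ?_ hline)
  ext y
  simp [eq_comm]

/-- The rows `0` and `1` are disjoint lines, so some linear functional is constant on each of them
but separates them. -/
theorem exists_linearMap_apply_eq_of_grid {G : K → K → W} (hG : Function.Injective2 G)
    {row col : K → Equiv.Perm K} (hrow : ∀ y, IsAffineCoordinate (row y) fun x => G x y)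
    (hcol : ∀ x, IsAffineCoordinate (col x) (G x)) :
    ∃ (l : W →ₗ[K] K) (p r : K), r ≠ 0 ∧ ∀ x y, l (G x y) = p + col x y * r := by
  set d₀ := G 1 0 - G 0 0 with hd₀
  set d₁ := G 1 1 - G 0 1 with hd₁
  set e := G 0 1 - G 0 0 with he
  have he_notMem : e ∉ span K {d₀, d₁} := fun hmem => by
    obtain ⟨r, s, hrs⟩ := mem_span_pair.1 hmem
    have hmeet : G ((row 0).symm r) 0 = G ((row 1).symm (-s)) 1 := by
      rw [(hrow 0).apply_eq, (hrow 1).apply_eq, Equiv.apply_symm_apply, Equiv.apply_symm_apply,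
        ← hd₀, ← hd₁, ← sub_add_cancel (G 0 1) (G 0 0), ← he, ← hrs]
      module
    exact zero_ne_one (hG hmeet).2
  obtain ⟨l, hle, hl⟩ := exists_le_ker_of_notMem he_notMem
  have hl₀ : l d₀ = 0 := hl (subset_span (by simp))
  have hl₁ : l d₁ = 0 := hl (subset_span (by simp))
  have hl_row₀ (x : K) : l (G x 0) = l (G 0 0) := by
    rw [(hrow 0).apply_eq, map_add, map_smul, hl₀, smul_zero, add_zero]
  have hl_row₁ (x : K) : l (G x 1) = l (G 0 0) + l e := by
    rw [(hrow 1).apply_eq, map_add, map_smul, hl₁, smul_zero, add_zero, ← map_add,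
      add_sub_cancel]
  refine ⟨l, l (G 0 0), l e, hle, fun x y => ?_⟩
  rw [(hcol x).apply_eq, map_add, map_smul, map_sub, hl_row₀, hl_row₁, smul_eq_mul]
  ring

/-- If the functional of `exists_linearMap_apply_eq_of_grid` were not constant on the row `y ≠ 0`,
then this row would meet row `0`. -/
theorem columnCoordinate_eq_of_grid {G : K → K → W} (hG : Function.Injective2 G)
    {row col : K → Equiv.Perm K} (hrow : ∀ y, IsAffineCoordinate (row y) fun x => G x y)
    (hcol : ∀ x, IsAffineCoordinate (col x) (G x)) (x : K) : col x = col 0 := by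
  obtain ⟨l, p, r, hr, hl_apply⟩ := exists_linearMap_apply_eq_of_grid hG hrow hcol
  ext y
  by_contra hne
  have hcol_affine (x : K) : col x y = col 0 y + row y x * (col 1 y - col 0 y) := by
    have h := congrArg l ((hrow y).apply_eq x)
    simp only [map_add, map_smul, map_sub, hl_apply, smul_eq_mul] at h
    exact mul_right_cancel₀ hr (by linear_combination h)
  have hslope : col 1 y - col 0 y ≠ 0 := fun h => hne (by rw [hcol_affine, h]; ring)
  obtain ⟨x', hx'⟩ := (row y).surjective (-col 0 y / (col 1 y - col 0 y))
  have hzero : col x' y = col x' 0 := by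
    rw [hcol_affine, hx', div_mul_cancel₀ _ hslope, (hcol x').map_zero, add_neg_cancel]
  have hy : y = 0 := (col x').injective hzero
  exact hne (by rw [hy, (hcol x).map_zero, (hcol 0).map_zero])

theorem rowCoordinate_eq_of_grid {G : K → K → W} (hG : Function.Injective2 G)
    {row col : K → Equiv.Perm K} (hrow : ∀ y, IsAffineCoordinate (row y) fun x => G x y)
    (hcol : ∀ x, IsAffineCoordinate (col x) (G x)) (y : K) : row y = row 0 :=
  columnCoordinate_eq_of_grid (G := fun y x => G x y)
    (fun _ _ _ _ h => (hG h).symm) hcol hrow y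

/-- The difference `f (s + 1) - f s` never vanishes; being affine in `f s`, it is constant. -/
theorem map_add_of_map_add_eq_add_mul {f : Equiv.Perm K} (h1 : f 1 = 1)
    (h : ∀ s t, f (s + t) = f s + f t * (f (s + 1) - f s)) (s t : K) :
    f (s + t) = f s + f t := by
  set k := f (1 + 1) - f 1 - 1 with hk
  have hdiff (s : K) : f (s + 1) - f s = 1 + f s * k := by
    rw [add_comm s, h 1 s, hk]
    linear_combination h1
  have hk0 : k = 0 := by
    by_contra hne
    obtain ⟨s, hs⟩ := f.surjective (-1 / k)
    have hfix : f (s + 1) = f s := by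
      rw [← sub_eq_zero, hdiff, hs, div_mul_cancel₀ _ hne, add_neg_cancel]
    exact one_ne_zero (add_eq_left.1 (f.injective hfix))
  rw [h, hdiff, hk0, mul_zero, add_zero, mul_one]

/-- Along every line parallel to `b`, the map `F` is affine up to the additive bijection `f`, which
is the same for all these lines. -/
structure AdditiveAlong (F : V → W) (b : V) (f : K ≃+ K) : Prop where
  map_one : f 1 = 1
  apply_add_smul (a : V) (t : K) : F (a + t • b) = F a + f t • (F (a + b) - F a)

theorem exists_additiveAlong {F : V → W} (hF : F.Injective) {b : V} (hb : b ≠ 0)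
    (hFb : MapsLinesOnto K F b) {S : Set V} (hS : span K S = ⊤)
    (hbS : ∀ c ∈ S, LinearIndependent K ![b, c]) (hFS : ∀ c ∈ S, MapsLinesOnto K F c) :
    ∃ f : K ≃+ K, AdditiveAlong F b f := by
  choose f hf using hFb.exists_isAffineCoordinate hF hb
  have eq_of_transversal (a c : V) (hc : c ∈ S) (y : K) : f (a + y • c) = f a := by
    choose g hg using (hFS c hc).exists_isAffineCoordinate hF ((hbS c hc).ne_zero 1)
    have hinj : Function.Injective2 fun x y : K => F (a + y • c + x • b) :=
      fun x x' y y' h => by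
        have := LinearIndependent.pair_iff.1 (hbS c hc) (x - x') (y - y')
          (by linear_combination (norm := module) hF h)
        simpa only [sub_eq_zero] using this
    simpa using rowCoordinate_eq_of_grid hinj (fun y => hf (a + y • c))
      (fun x => by simpa only [add_right_comm] using hg (a + x • b)) y
  have eq_zero (a : V) : f a = f 0 := by
    have translate (x : V) : ∀ a, f (a + x) = f a := by
      have hx : x ∈ span K S := hS ▸ mem_top
      induction hx using closure_induction with
      | zero => simp
      | add x y _ _ hx hy => intro a; rw [← add_assoc, hy, hx]
      | smul_mem r x hx => exact fun a => eq_of_transversal a x hx r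
    simpa using translate a 0
  have hone : f 0 1 = 1 := (hf 0).map_one
  have happly (a : V) (t : K) : F (a + t • b) = F a + f 0 t • (F (a + b) - F a) := by
    simpa [eq_zero a] using (hf a).apply_eq t
  have hmul (s t : K) : f 0 (s + t) = f 0 s + f 0 t * (f 0 (s + 1) - f 0 s) := by
    have hne : F b - F 0 ≠ 0 := sub_ne_zero.2 (hF.ne hb)
    have hline (t : K) : F (t • b) = F 0 + f 0 t • (F b - F 0) := by simpa using happly 0 t
    have h := happly (s • b) t
    have hsucc : s • b + b = (s + 1) • b := by module
    rw [← add_smul, hsucc, hline, hline, hline] at h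
    exact smul_left_injective K hne (by linear_combination (norm := module) h)
  exact ⟨{ f 0 with map_add' := map_add_of_map_add_eq_add_mul hone hmul }, hone, happly⟩

namespace AdditiveAlong

variable {F : V → W} {b : V} {f : K ≃+ K}

theorem apply_add_add_apply_sub (h : AdditiveAlong F b f) (a : V) :
    F (a + b) + F (a - b) = (2 : K) • F a := by
  have hneg := h.apply_add_smul a (-1)
  rw [neg_one_smul, ← sub_eq_add_neg, map_neg, h.map_one] at hneg
  rw [hneg]
  module

theorem comp_linearMap {U : Type*} [AddCommGroup U] [Module K U] (l : U →ₗ[K] V) {c : U}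
    (h : AdditiveAlong F (l c) f) : AdditiveAlong (F ∘ l) c f :=
  ⟨h.map_one, fun a t => by simpa using h.apply_add_smul (l a) t⟩

theorem exists_smul (h : AdditiveAlong F b f) {s : K} (hs : s ≠ 0) :
    ∃ g : K ≃+ K, AdditiveAlong F (s • b) g := by
  have hfs : f s ≠ 0 := (map_ne_zero_iff f f.injective).2 hs
  let g : Equiv.Perm K :=
    (Equiv.mulLeft₀ s hs).trans (f.toEquiv.trans (Equiv.divRight₀ (f s) hfs))
  have hg (t : K) : g t = f (s * t) / f s := rfl
  refine ⟨{ g with map_add' := fun x y => ?_ }, ?_, fun a t => ?_⟩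
  · exact (hg _).trans (by rw [mul_add, map_add, add_div]; rfl)
  · exact (hg 1).trans (by rw [mul_one, div_self hfs])
  · change F (a + t • s • b) = F a + g t • (F (a + s • b) - F a)
    rw [hg, smul_smul, mul_comm t s, h.apply_add_smul, h.apply_add_smul a s, add_sub_cancel_left,
      smul_smul, div_mul_cancel₀ _ hfs]

end AdditiveAlong

end Lines

section Independence

variable {K V W ι : Type*} [Field K] [AddCommGroup V] [Module K V] [AddCommGroup W] [Module K W]

theorem sum_smul_mem_span_image {κ : Type*} [Fintype κ] {v : ι → V} (φ : κ → ι)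
    {e : κ → V} (he : ∀ k, e k ∈ span K {v (φ k)}) {c : κ → K} {s : Set κ} (hc : ∀ k ∉ s, c k = 0) :
    ∑ k, c k • e k ∈ span K (v '' (φ '' s)) := by
  refine sum_mem fun k _ => ?_
  by_cases hk : k ∈ s
  · refine smul_mem _ _ (span_mono ?_ (he k))
    exact Set.singleton_subset_iff.2 ⟨φ k, ⟨k, hk, rfl⟩, rfl⟩
  · simp [hc k hk]

variable (K) in
/-- Every `j` of the vectors `v i` are linearly independent. -/
def JIndependent (j : ℕ) (v : ι → V) : Prop :=
  ∀ s : Finset ι, s.card = j → LinearIndepOn K v s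

namespace JIndependent

variable [Fintype ι] {j : ℕ} {v : ι → V}

theorem linearIndepOn (hv : JIndependent K j v) (hj : j ≤ Fintype.card ι) {s : Finset ι}
    (hs : s.card ≤ j) : LinearIndepOn K v s := by
  obtain ⟨t, hst, ht⟩ := Finset.exists_superset_card_eq hs hj
  exact (hv t ht).mono (Finset.coe_subset.2 hst)

theorem notMem_span_image (hv : JIndependent K j v) (hj : j ≤ Fintype.card ι) {s : Finset ι}
    (hs : s.card < j) {i : ι} (hi : i ∉ s) : v i ∉ span K (v '' s) := by
  classical
  have hins : LinearIndepOn K v (insert i s : Finset ι) :=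
    hv.linearIndepOn hj ((Finset.card_insert_of_notMem hi).trans_le hs)
  rw [Finset.coe_insert] at hins
  exact hins.notMem_span_of_insert (Finset.mem_coe.not.2 hi)

theorem linearIndependent_pair (hv : JIndependent K j v) (hj : j ≤ Fintype.card ι) (h2 : 2 ≤ j)
    {i k : ι} (hik : i ≠ k) : LinearIndependent K ![v i, v k] := by
  classical
  have hpair : LinearIndepOn K v ({i, k} : Finset ι) :=
    hv.linearIndepOn hj (Finset.card_le_two.trans h2)
  rw [Finset.coe_pair, LinearIndepOn.pair_iff _ hik] at hpair
  exact LinearIndependent.pair_iff.2 hpair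

theorem span_image_compl_singleton [FiniteDimensional K V] (hv : JIndependent K (finrank K V) v)
    (hcard : finrank K V < Fintype.card ι) (i : ι) : span K (v '' {i}ᶜ) = ⊤ := by
  classical
  have hle : finrank K V ≤ (Finset.univ.erase i).card := by
    rw [Finset.card_erase_of_mem (Finset.mem_univ i), Finset.card_univ]
    exact Nat.le_sub_one_of_lt hcard
  obtain ⟨s, hs, hs_card⟩ := Finset.exists_subset_card_eq hle
  have hsub : (s : Set ι) ⊆ {i}ᶜ := fun k hk => Finset.ne_of_mem_erase (hs hk)
  have htop : span K (v '' s) = ⊤ := by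
    rw [Set.image_eq_range]
    exact LinearIndependent.span_eq_top_of_card_eq_finrank' (hv s hs_card) (by simpa using hs_card)
  exact top_unique (htop.ge.trans (span_mono (Set.image_mono hsub)))

theorem exists_additiveAlong (hv : JIndependent K (finrank K V) v) (hV : 2 ≤ finrank K V)
    (hcard : finrank K V < Fintype.card ι) {F : V → W} (hF : F.Injective)
    (hFv : ∀ i, MapsLinesOnto K F (v i)) (i : ι) : ∃ f : K ≃+ K, AdditiveAlong F (v i) f := by
  classical
  have : FiniteDimensional K V := Module.finite_of_finrank_pos (by lia)
  obtain ⟨k, hk⟩ := Fintype.exists_ne_of_one_lt_card (by lia) i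
  have hvi : v i ≠ 0 := (hv.linearIndependent_pair hcard.le hV hk.symm).ne_zero 0
  refine _root_.exists_additiveAlong hF hvi (hFv i) (hv.span_image_compl_singleton hcard i)
    (Set.forall_mem_image.2 fun k hk => ?_) (Set.forall_mem_image.2 fun k _ => hFv k)
  exact hv.linearIndependent_pair hcard.le hV (Ne.symm hk)

theorem repr_ne_zero {κ : Type*} [Fintype κ] (hv : JIndependent K (Fintype.card κ) v)
    (hcard : Fintype.card κ ≤ Fintype.card ι) (φ : κ → ι) (e : Basis κ K V)
    (he : ∀ k, e k ∈ span K {v (φ k)}) {i : ι} (hi : i ∉ Set.range φ) (k : κ) :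
    e.repr (v i) k ≠ 0 := fun hk => by
  classical
  have hs : ((Finset.univ.erase k).image φ).card < Fintype.card κ :=
    Finset.card_image_le.trans_lt (Finset.card_erase_lt_of_mem (Finset.mem_univ k))
  refine hv.notMem_span_image hcard hs (i := i) (by grind) ?_
  have hmem := sum_smul_mem_span_image φ he (c := e.repr (v i))
    (s := (Finset.univ.erase k : Finset κ)) (by grind)
  rwa [e.sum_repr, ← Finset.coe_image] at hmem

theorem repr_injective {κ : Type*} [Fintype κ] (hv : JIndependent K (Fintype.card κ) v)
    (hcard : Fintype.card κ ≤ Fintype.card ι) (φ : κ → ι) (e : Basis κ K V)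
    (he : ∀ k, e k ∈ span K {v (φ k)}) {i j : ι} (hj : j ∉ Set.range φ) (hij : i ≠ j)
    (hvi : v i = ∑ k, e k) : Function.Injective (e.repr (v j)) := fun k l hkl => by
  classical
  by_contra hne
  set p := e.repr (v j)
  set s : Finset κ := (Finset.univ.erase k).erase l
  have hs : (insert i (s.image φ)).card < Fintype.card κ := by
    have := Finset.card_insert_le i (s.image φ)
    have : (s.image φ).card ≤ s.card := Finset.card_image_le
    have : s.card < (Finset.univ.erase k).card := Finset.card_erase_lt_of_mem (by grind)
    have : (Finset.univ.erase k).card < Fintype.card κ :=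
      Finset.card_erase_lt_of_mem (Finset.mem_univ k)
    lia
  refine hv.notMem_span_image hcard hs (i := j) (by grind) ?_
  have hmem := sum_smul_mem_span_image φ he (c := fun m => p m - p k) (s := s) (by grind)
  have hsum : v j = p k • v i + ∑ m, (p m - p k) • e m := by
    simp only [sub_smul, Finset.sum_sub_distrib, ← Finset.smul_sum, ← hvi]
    rw [e.sum_repr, add_sub_cancel]
  rw [hsum, Finset.coe_insert, Finset.coe_image]
  exact add_mem (smul_mem _ _ (subset_span (Set.mem_image_of_mem v (Set.mem_insert _ _))))
    (span_mono (Set.image_mono (Set.subset_insert _ _)) hmem)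

theorem exists_basis_sum_eq {κ : Type*} [Fintype κ] [Nonempty κ]
    (hv : JIndependent K (Fintype.card κ) v) (hV : Fintype.card κ = finrank K V)
    (hcard : Fintype.card κ ≤ Fintype.card ι) (φ : κ ↪ ι) {i : ι} (hi : i ∉ Set.range φ) :
    ∃ e : Basis κ K V, (∀ k, e k ∈ span K {v (φ k)}) ∧ v i = ∑ k, e k := by
  have hli : LinearIndependent K (v ∘ φ) := by
    have hon := hv.linearIndepOn hcard (s := Finset.univ.map φ) (by simp)
    rw [Finset.coe_map, Finset.coe_univ, Set.image_univ] at hon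
    exact (linearIndepOn_range_iff φ.injective v).1 hon
  set b := basisOfLinearIndependentOfCardEqFinrank hli hV
  have hb (k : κ) : b k = v (φ k) := by simp [b]
  have hc := hv.repr_ne_zero hcard φ b (fun k => hb k ▸ mem_span_singleton_self _) hi
  refine ⟨b.unitsSMul fun k => Units.mk0 _ (hc k), fun k => ?_, ?_⟩
  · rw [Basis.unitsSMul_apply, hb]
    exact smul_mem _ _ (mem_span_singleton_self _)
  · simp [Basis.unitsSMul_apply, Units.smul_def, b.sum_repr]

end JIndependent

end Independence

section Coordinates

variable {K M N W : Type*} [Field K] [AddCommGroup M] [Module K M] [AddCommGroup N] [Module K N]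
  [AddCommGroup W] [Module K W]

/-- The quadratic map `x ↦ ∑ i, (x (i + 1) * x (i + 2)) • q i` without square terms. Each
coefficient is indexed by the variable that is missing from its monomial. -/
def offDiag (q : Fin 3 → W) : QuadraticMap K (Fin 3 → K) W :=
  ∑ i, (LinearMap.toSpanSingleton K W (q i)).compQuadraticMap
    (QuadraticMap.linMulLin (LinearMap.proj (i + 1)) (LinearMap.proj (i + 2)))

theorem offDiag_apply (q : Fin 3 → W) (x : Fin 3 → K) :
    offDiag q x = ∑ i, (x (i + 1) * x (i + 2)) • q i := by
  simp [offDiag]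

theorem offDiag_smul_const (k : Fin 3 → K) (w : W) (x : Fin 3 → K) :
    offDiag (fun i => k i • w) x = offDiag k x • w := by
  simp only [offDiag_apply, Finset.sum_smul, smul_smul, smul_eq_mul]

theorem polar_offDiag (k a x : Fin 3 → K) :
    QuadraticMap.polar (offDiag k) a x =
      ∑ i, k i * (a (i + 1) * x (i + 2) + x (i + 1) * a (i + 2)) := by
  simp only [QuadraticMap.polar, offDiag_apply, ← Finset.sum_sub_distrib, Pi.add_apply, smul_eq_mul]
  exact Finset.sum_congr rfl fun i _ => by ring

theorem separatingLeft_polarBilin_offDiag [NeZero (2 : K)] {k : Fin 3 → K} (hk : ∀ i, k i ≠ 0) :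
    (QuadraticMap.polarBilin (offDiag k : QuadraticForm K (Fin 3 → K))).SeparatingLeft :=
  fun a ha => by
  have hpolar (i : Fin 3) : k (i + 2) * a (i + 1) + k (i + 1) * a (i + 2) = 0 := by
    have h := ha (Pi.single i 1)
    rw [QuadraticMap.polarBilin_apply_apply, polar_offDiag] at h
    fin_cases i <;> simpa [Fin.sum_univ_three, add_comm] using h
  choose m hm using fun i => show ∃ m, a i = m * k i from
    ⟨a i / k i, (div_mul_cancel₀ _ (hk i)).symm⟩
  have hm_add (i : Fin 3) : m (i + 1) + m (i + 2) = 0 := by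
    have h := hpolar i
    rw [hm, hm] at h
    exact (mul_eq_zero.1 (by linear_combination h :
      k (i + 1) * k (i + 2) * (m (i + 1) + m (i + 2)) = 0)).resolve_left
        (mul_ne_zero (hk _) (hk _))
  have hm_zero (i : Fin 3) : m i = 0 := by
    have h1 : m (i + 2) + m i = 0 := by simpa [add_assoc] using hm_add (i + 1)
    have h2 : m i + m (i + 1) = 0 := by simpa [add_assoc] using hm_add (i + 2)
    have two_mul_m : 2 * m i = 0 := by linear_combination h1 + h2 - hm_add i
    exact (mul_eq_zero.1 two_mul_m).resolve_left two_ne_zero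
  ext i
  rw [hm, hm_zero, zero_mul, Pi.zero_apply]

/-- A quadratic map takes equal values at `x` and `-x`. -/
theorem injective_of_injective_add_quadraticMap [NeZero (2 : K)] (L : M →ₗ[K] N)
    (Q : QuadraticMap K M N) (h : Function.Injective fun x => L x + Q x) :
    Function.Injective L := (injective_iff_map_eq_zero L).2 fun x hx => by
  have hneg : x = -x := h (by simp only [map_neg, hx, neg_zero, QuadraticMap.map_neg])
  have htwo : (2 : K) • x = 0 := by rw [two_smul]; nth_rw 2 [hneg]; exact add_neg_cancel x
  exact (smul_eq_zero.1 htwo).resolve_left two_ne_zero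

/-- Going from `x` to `x + s • a` changes the value by
`(s * (1 + polar c x a + s * c a)) • L a`, and the scalar factor vanishes for suitable `x` and
`s ≠ 0`. -/
theorem eq_zero_of_injective_add_smul (L : M →ₗ[K] N) {c : QuadraticForm K M}
    (hc : c.polarBilin.SeparatingLeft) (a : M)
    (h : Function.Injective fun x => L x + c x • L a) : a = 0 := by
  have ne_zero (x : M) {s : K} (hs : s ≠ 0) (hx : 1 + QuadraticMap.polar c x a + s * c a = 0) :
      a = 0 := by
    have hcx : c (x + s • a) = c x + s * QuadraticMap.polar c x a + s * s * c a := by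
      rw [QuadraticMap.map_add c, QuadraticMap.map_smul, QuadraticMap.polar_smul_right,
        smul_eq_mul, smul_eq_mul]
      ring
    have heq : x + s • a = x := h (by
      simp only [map_add, map_smul, hcx]
      linear_combination (norm := module) s • congrArg (· • L a) hx)
    exact (smul_eq_zero.1 (add_eq_left.1 heq)).resolve_left hs
  by_contra ha
  by_cases hca : c a = 0
  · obtain ⟨x, hx⟩ : ∃ x, c.polarBilin a x ≠ 0 := by
      by_contra! hall
      exact ha (hc a hall)
    rw [QuadraticMap.polarBilin_apply_apply] at hx
    refine ha (ne_zero (-(QuadraticMap.polar c a x)⁻¹ • x) one_ne_zero ?_)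
    rw [QuadraticMap.polar_smul_left, QuadraticMap.polar_comm c x, hca, smul_eq_mul,
      neg_mul, inv_mul_cancel₀ hx]
    ring
  · refine ha (ne_zero 0 (s := -(c a)⁻¹) (neg_ne_zero.2 (inv_ne_zero hca)) ?_)
    rw [QuadraticMap.polar_zero_left, neg_mul, inv_mul_cancel₀ hca]
    ring

/-- The coefficients are the cross product of `(x 1 * x 2, x 2 * x 0, x 0 * x 1)` and `(1, 1, 1)`,
the vectors of the two linear conditions on `q`. -/
theorem exists_eq_smul_of_offDiag_eq_zero {q : Fin 3 → W} (hq : ∑ i, q i = 0) {x : Fin 3 → K}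
    (hx : x.Injective) (hx0 : ∀ i, x i ≠ 0) (h : offDiag q x = 0) :
    ∃ w, ∀ i, q i = (x i * (x (i + 2) - x (i + 1))) • w := by
  rw [Fin.sum_univ_three] at hq
  simp only [offDiag_apply, Fin.sum_univ_three, Fin.isValue, zero_add, Fin.reduceAdd] at h
  have h01 : x 1 - x 0 ≠ 0 := sub_ne_zero.2 (hx.ne (by decide))
  have hw : q 2 = (x 2 * (x 1 - x 0)) • (x 2 * (x 1 - x 0))⁻¹ • q 2 :=
    (smul_inv_smul₀ (mul_ne_zero (hx0 2) h01) _).symm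
  set w := (x 2 * (x 1 - x 0))⁻¹ • q 2
  have h0 : q 0 = (x 0 * (x 2 - x 1)) • w := by
    refine smul_right_injective W (mul_ne_zero (hx0 2) h01) ?_
    calc (x 2 * (x 1 - x 0)) • q 0 = (x 0 * (x 2 - x 1)) • q 2 := by
          linear_combination (norm := module) h - (x 2 * x 0) • hq
      _ = (x 2 * (x 1 - x 0)) • (x 0 * (x 2 - x 1)) • w := by rw [hw, smul_comm]
  refine ⟨w, fun i => ?_⟩
  fin_cases i
  · exact h0
  · have h1 : q 1 = -q 0 - q 2 := by linear_combination (norm := module) hq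
    simp only [Fin.mk_one, h1]
    rw [h0, hw]
    simp only [Fin.isValue, Fin.reduceAdd]
    module
  · simpa using hw

theorem AdditiveAlong.apply_eq_update {ι : Type*} [DecidableEq ι] {F : (ι → K) → W} {i : ι}
    {f : K ≃+ K} (h : AdditiveAlong F (Pi.single i 1) f) (x : ι → K) :
    F x = F (Function.update x i 0)
      + f (x i) • (F (Function.update x i 1) - F (Function.update x i 0)) := by
  have hline (t : K) : Function.update x i 0 + t • Pi.single i 1 = Function.update x i t := by
    ext j
    obtain rfl | hj := eq_or_ne j i <;> simp [*]
  have := h.apply_add_smul (Function.update x i 0) (x i)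
  have hunit : Function.update x i 0 + Pi.single i 1 = Function.update x i 1 := by
    simpa only [one_smul] using hline 1
  rwa [hline, Function.update_eq_self, hunit] at this

theorem exists_eq_add_offDiag_add {F : (Fin 3 → K) → W} {f : Fin 3 → K ≃+ K}
    (hF : ∀ i, AdditiveAlong F (Pi.single i 1) (f i)) :
    ∃ (u q : Fin 3 → W) (t : W), ∀ x, F x = F 0 + Fintype.linearCombination K u (fun i => f i (x i))
      + offDiag q (fun i => f i (x i)) + (∏ i, f i (x i)) • t := by
  have h0 (x y z : K) : F ![x, y, z] = F ![0, y, z] + f 0 x • (F ![1, y, z] - F ![0, y, z]) := by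
    have update_eq (t : K) : Function.update ![x, y, z] 0 t = ![t, y, z] := by
      ext i; fin_cases i <;> rfl
    simpa [update_eq] using (hF 0).apply_eq_update ![x, y, z]
  have h1 (x y z : K) : F ![x, y, z] = F ![x, 0, z] + f 1 y • (F ![x, 1, z] - F ![x, 0, z]) := by
    have update_eq (t : K) : Function.update ![x, y, z] 1 t = ![x, t, z] := by
      ext i; fin_cases i <;> rfl
    simpa [update_eq] using (hF 1).apply_eq_update ![x, y, z]
  have h2 (x y z : K) : F ![x, y, z] = F ![x, y, 0] + f 2 z • (F ![x, y, 1] - F ![x, y, 0]) := by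
    have update_eq (t : K) : Function.update ![x, y, z] 2 t = ![x, y, t] := by
      ext i; fin_cases i <;> rfl
    simpa [update_eq] using (hF 2).apply_eq_update ![x, y, z]
  refine ⟨![F ![1, 0, 0] - F ![0, 0, 0], F ![0, 1, 0] - F ![0, 0, 0], F ![0, 0, 1] - F ![0, 0, 0]],
    ![F ![0, 1, 1] - F ![0, 1, 0] - F ![0, 0, 1] + F ![0, 0, 0],
      F ![1, 0, 1] - F ![1, 0, 0] - F ![0, 0, 1] + F ![0, 0, 0],
      F ![1, 1, 0] - F ![1, 0, 0] - F ![0, 1, 0] + F ![0, 0, 0]],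
    F ![1, 1, 1] - F ![1, 1, 0] - F ![1, 0, 1] - F ![0, 1, 1]
      + F ![1, 0, 0] + F ![0, 1, 0] + F ![0, 0, 1] - F ![0, 0, 0], fun x => ?_⟩
  have hx : x = ![x 0, x 1, x 2] := by ext i; fin_cases i <;> rfl
  have hzero : (0 : Fin 3 → K) = ![0, 0, 0] := by ext i; fin_cases i <;> rfl
  conv_lhs => rw [hx, h2, h1 _ _ 0, h1 _ _ 1, h0 _ 0 0, h0 _ 1 0, h0 _ 0 1, h0 _ 1 1]
  simp only [hzero, Fintype.linearCombination_apply, offDiag_apply, Fin.sum_univ_three,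
    Fin.prod_univ_three, Fin.isValue, Fin.reduceAdd, zero_add, Matrix.cons_val_zero,
    Matrix.cons_val_one, Matrix.cons_val]
  module

/-- Comparing the values at `a + 1`, `a` and `a - 1` for `a = 0` and `a = Pi.single 0 1`. -/
theorem exists_eq_add_offDiag [NeZero (2 : K)] {F : (Fin 3 → K) → W} {f : Fin 3 → K ≃+ K}
    (hF : ∀ i, AdditiveAlong F (Pi.single i 1) (f i)) {g : K ≃+ K} (hg : AdditiveAlong F 1 g) :
    ∃ u q : Fin 3 → W, ∑ i, q i = 0 ∧ ∀ x, F x = F 0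
      + Fintype.linearCombination K u (fun i => f i (x i)) + offDiag q (fun i => f i (x i)) := by
  obtain ⟨u, q, t, hFx⟩ := exists_eq_add_offDiag_add hF
  have hf (i : Fin 3) : f i 1 = 1 := (hF i).map_one
  have two_smul_sum : (2 : K) • ∑ i, q i = 0 := by
    have h := hg.apply_add_add_apply_sub 0
    rw [hFx (0 + 1), hFx (0 - 1)] at h
    simp only [zero_add, zero_sub, Pi.one_apply, Pi.neg_apply, map_neg, hf,
      Fintype.linearCombination_apply, offDiag_apply, Fin.sum_univ_three, Fin.prod_univ_three]
      at h ⊢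
    linear_combination (norm := module) h
  have two_smul_sum_add : (2 : K) • (∑ i, q i + t) = 0 := by
    have h := hg.apply_add_add_apply_sub (Pi.single 0 1)
    rw [hFx (_ + 1), hFx (_ - 1), hFx (Pi.single 0 1)] at h
    simp only [Pi.add_apply, Pi.sub_apply, Pi.one_apply, map_add, map_sub, hf, Pi.single_eq_same,
      ne_eq, Fin.isValue, Fin.reduceEq, not_false_eq_true, Pi.single_eq_of_ne, map_zero,
      Fintype.linearCombination_apply, offDiag_apply, Fin.sum_univ_three, Fin.prod_univ_three,
      Fin.reduceAdd, zero_add, one_ne_zero] at h ⊢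
    linear_combination (norm := module) h
  have hq : ∑ i, q i = 0 := (smul_eq_zero.1 two_smul_sum).resolve_left two_ne_zero
  have ht : t = 0 := by
    rw [hq, zero_add] at two_smul_sum_add
    exact (smul_eq_zero.1 two_smul_sum_add).resolve_left two_ne_zero
  exact ⟨u, q, hq, fun x => by rw [hFx x, ht, smul_zero, add_zero]⟩

theorem coordinate_eq_of_additiveAlong_one [NeZero (2 : K)] {ι : Type*} {F : (ι → K) → W}
    {f : ι → K ≃+ K} (hf : ∀ i, f i 1 = 1) {L : (ι → K) →ₗ[K] W} (hL : Function.Injective L)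
    {Q : QuadraticMap K (ι → K) W}
    (hF : ∀ x, F x = F 0 + L (fun i => f i (x i)) + Q (fun i => f i (x i))) {g : K ≃+ K}
    (hg : AdditiveAlong F 1 g) (i : ι) : f i = g := by
  have hL_apply (t : K) : L (fun i => f i t) = g t • (F 1 - F 0) := by
    have hplus := hg.apply_add_smul 0 t
    have hminus := hg.apply_add_smul 0 (-t)
    have hneg : (fun i => f i (-t)) = -fun i => f i t := funext fun i => map_neg (f i) t
    rw [hF (0 + t • 1)] at hplus
    rw [hF (0 + (-t) • 1)] at hminus
    simp only [zero_add, Pi.smul_apply, Pi.one_apply, smul_eq_mul, mul_one] at hplus hminus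
    rw [hneg, map_neg, QuadraticMap.map_neg, map_neg] at hminus
    refine smul_right_injective W (two_ne_zero (α := K)) ?_
    linear_combination (norm := module) hplus - hminus
  have hL_one : L 1 = F 1 - F 0 := by
    simpa only [hf, hg.map_one, one_smul] using! hL_apply 1
  ext t
  have hL_smul : L (fun i => f i t) = L (g t • 1) := by rw [hL_apply, map_smul, hL_one]
  simpa using congrFun (hL hL_smul) i

theorem exists_eq_add_offDiag_comp [NeZero (2 : K)] {F : (Fin 3 → K) → W} (hinj : F.Injective)
    {f : Fin 3 → K ≃+ K} (hF : ∀ i, AdditiveAlong F (Pi.single i 1) (f i)) {g : K ≃+ K}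
    (hg : AdditiveAlong F 1 g) :
    ∃ (L : (Fin 3 → K) →ₗ[K] W) (q : Fin 3 → W), Function.Injective L ∧ ∑ i, q i = 0 ∧
      (Function.Injective fun x => L x + offDiag q x) ∧
      ∀ x, F x = F 0 + L (g ∘ x) + offDiag q (g ∘ x) := by
  obtain ⟨u, q, hq, hFx⟩ := exists_eq_add_offDiag hF hg
  set L := Fintype.linearCombination K u
  let φ : (Fin 3 → K) ≃ (Fin 3 → K) := Equiv.piCongrRight fun i => (f i).toEquiv
  have hFφ (x : Fin 3 → K) : F x = F 0 + L (φ x) + offDiag q (φ x) := hFx x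
  have hLQ : Function.Injective fun x => L x + offDiag q x := fun x y hxy =>
    φ.symm.injective (hinj (by
      rw [hFφ (φ.symm x), hFφ (φ.symm y), φ.apply_symm_apply, φ.apply_symm_apply, add_assoc,
        add_assoc]
      exact congrArg (F 0 + ·) hxy))
  have hL : Function.Injective L := injective_of_injective_add_quadraticMap L (offDiag q) hLQ
  have hfg (i : Fin 3) : f i = g :=
    coordinate_eq_of_additiveAlong_one (fun i => (hF i).map_one) hL hFx hg i
  exact ⟨L, q, hL, hq, hLQ, fun x => by simpa only [hfg] using! hFx x⟩

theorem exists_eq_add_linearMap_comp [NeZero (2 : K)] (hW : finrank K W = 3)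
    {F : (Fin 3 → K) → W} (hinj : F.Injective)
    {f : Fin 3 → K ≃+ K} (hF : ∀ i, AdditiveAlong F (Pi.single i 1) (f i)) {g : K ≃+ K}
    (hg : AdditiveAlong F 1 g) {p : Fin 3 → K} (hp : p.Injective) (hp0 : ∀ i, p i ≠ 0)
    {h : K ≃+ K} (hh : AdditiveAlong F p h) :
    ∃ L : (Fin 3 → K) →ₗ[K] W, Function.Injective L ∧ ∀ x, F x = F 0 + L (g ∘ x) := by
  obtain ⟨L, q, hL, hq, hLQ, hFx⟩ := exists_eq_add_offDiag_comp hinj hF hg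
  suffices hq0 : q = 0 from ⟨L, hL, fun x => by simpa [hq0, offDiag_apply] using hFx x⟩
  have hQp : offDiag q (g ∘ p) = 0 := by
    have hadd := hh.apply_add_add_apply_sub 0
    rw [hFx (0 + p), hFx (0 - p)] at hadd
    have hneg : g ∘ (0 - p) = -(g ∘ p) := by ext i; simp
    rw [hneg, zero_add, map_neg, QuadraticMap.map_neg] at hadd
    have two_smul_eq : (2 : K) • offDiag q (g ∘ p) = 0 := by
      linear_combination (norm := module) hadd
    exact (smul_eq_zero.1 two_smul_eq).resolve_left two_ne_zero
  obtain ⟨w, hw⟩ := exists_eq_smul_of_offDiag_eq_zero hq (g.injective.comp hp)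
    (fun i => (map_ne_zero_iff g g.injective).2 (hp0 i)) hQp
  set k : Fin 3 → K := fun i => g (p i) * (g (p (i + 2)) - g (p (i + 1)))
  have hk (i : Fin 3) : k i ≠ 0 := by
    refine mul_ne_zero ((map_ne_zero_iff g g.injective).2 (hp0 i)) (sub_ne_zero.2 ?_)
    exact g.injective.ne (hp.ne (by simp))
  have : FiniteDimensional K W := Module.finite_of_finrank_pos (by lia)
  obtain ⟨a, rfl⟩ : ∃ a, L a = w :=
    ((LinearMap.injective_iff_surjective_of_finrank_eq_finrank (by simp [hW])).1 hL) w
  have hqk : q = fun i => k i • L a := funext hw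
  have ha : a = 0 := eq_zero_of_injective_add_smul L (separatingLeft_polarBilin_offDiag hk) a
    (by simpa only [hqk, offDiag_smul_const] using hLQ)
  simp [hqk, ha, funext_iff]

end Coordinates

section FiveDirections

variable {K V W : Type*} [Field K] [NeZero (2 : K)] [AddCommGroup V] [Module K V]
  [AddCommGroup W] [Module K W]

theorem exists_basis_apply_sum_eq (hV : finrank K V = 3) (hW : finrank K W = 3)
    {v : Fin 5 → V} (hv : JIndependent K 3 v) {F : V → W} (hF : F.Injective)
    (hFv : ∀ i, MapsLinesOnto K F (v i)) :
    ∃ (u : Basis (Fin 3) K V) (g : K ≃+ K) (L : (Fin 3 → K) →ₗ[K] W), g 1 = 1 ∧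
      Function.Injective L ∧ ∀ α : Fin 3 → K, F (∑ i, α i • u i) = F 0 + L (g ∘ α) := by
  have hcard : Fintype.card (Fin 3) = 3 := Fintype.card_fin 3
  have hle : Fintype.card (Fin 3) ≤ Fintype.card (Fin 5) := by simp
  have hv' : JIndependent K (Fintype.card (Fin 3)) v := hcard.symm ▸ hv
  let φ : Fin 3 ↪ Fin 5 := Fin.castLEEmb (by lia)
  have hφ3 : 3 ∉ Set.range φ := by decide
  have hφ4 : 4 ∉ Set.range φ := by decide
  obtain ⟨u, hu, hsum⟩ := hv'.exists_basis_sum_eq (by rw [hcard, hV]) hle φ hφ3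
  have along_v (i : Fin 5) : ∃ f : K ≃+ K, AdditiveAlong F (v i) f :=
    JIndependent.exists_additiveAlong (hV ▸ hv) (by lia) (by simp [hV]) hF hFv i
  have along_u (i : Fin 3) : ∃ f : K ≃+ K, AdditiveAlong F (u i) f := by
    obtain ⟨s, hs⟩ := mem_span_singleton.1 (hu i)
    obtain ⟨f, hf⟩ := along_v (φ i)
    exact hs ▸ hf.exists_smul (left_ne_zero_of_smul (hs ▸ u.ne_zero i))
  let l : (Fin 3 → K) ≃ₗ[K] V := u.equivFun.symm
  choose f hf using along_u
  obtain ⟨g, hg⟩ := along_v 3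
  obtain ⟨h, hh⟩ := along_v 4
  have hl_single (i : Fin 3) : l (Pi.single i 1) = u i := by simp [l]
  have hl_one : l 1 = v 3 := by simp [l, Basis.equivFun_symm_apply, hsum]
  have hl_repr : l (u.repr (v 4)) = v 4 := u.equivFun.symm_apply_apply (v 4)
  obtain ⟨L, hL, hFL⟩ := exists_eq_add_linearMap_comp hW (hF.comp l.injective)
    (fun i => AdditiveAlong.comp_linearMap l.toLinearMap (by simpa [hl_single] using hf i))
    (AdditiveAlong.comp_linearMap l.toLinearMap (by simpa [hl_one] using hg))
    (hv'.repr_injective hle φ u hu hφ4 (by decide) hsum) (hv'.repr_ne_zero hle φ u hu hφ4)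
    (AdditiveAlong.comp_linearMap l.toLinearMap (by simpa [hl_repr] using hh))
  refine ⟨u, g, L, hg.map_one, hL, fun α => ?_⟩
  simpa [l, Basis.equivFun_symm_apply] using hFL α

theorem affine_additive_of_five_directions_R3_general (hV : finrank K V = 3) (hW : finrank K W = 3)
    {v : Fin 5 → V} (hv : JIndependent K 3 v) {F : V → W} (hF : F.Injective)
    (hFv : ∀ i, MapsLinesOnto K F (v i)) :
    (∃ (A : V →+ W) (c : W), ∀ x, F x = A x + c) ∧
      ∃ (u : Basis (Fin 3) K V) (w : Basis (Fin 3) K W) (f : K ≃+ K), f 1 = 1 ∧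
        ∀ α : Fin 3 → K, F (∑ i, α i • u i) - F 0 = ∑ i, f (α i) • w i := by
  have : FiniteDimensional K W := Module.finite_of_finrank_pos (by lia)
  obtain ⟨u, f, L, hf, hL, hFL⟩ := exists_basis_apply_sum_eq hV hW hv hF hFv
  refine ⟨⟨L.toAddMonoidHom.comp ((f.toAddMonoidHom.compLeft (Fin 3)).comp
    u.equivFun.toLinearMap.toAddMonoidHom), F 0, fun x => ?_⟩, ?_⟩
  · conv_lhs => rw [← u.sum_equivFun x, hFL, add_comm]
    rfl
  · let w := Basis.ofEquivFun (L.linearEquivOfInjective hL (by simp [hW])).symm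
    refine ⟨u, w, f, hf, fun α => ?_⟩
    calc F (∑ i, α i • u i) - F 0 = L (f ∘ α) := by rw [hFL, add_sub_cancel_left]
      _ = w.equivFun.symm (f ∘ α) := by rw [Basis.equivFun_ofEquivFun]; rfl
      _ = ∑ i, f (α i) • w i := w.equivFun_symm_apply _

end FiveDirections

/-- **Theorem (fundamental theorem in ℝ³ with five directions).**
If `v₁,…,v₅ ∈ ℝ³` are `3`-independent and `F : ℝ³ → ℝ³` is an injection mapping each
line in `ℒ(v₁,…,v₅)` onto a line, then `F` is affine-additive; moreover there exist
bases `u₁,u₂,u₃` and `w₁,w₂,w₃` of `ℝ³`, and additive bijections `fᵢ : ℝ → ℝ` with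
`fᵢ 1 = 1`, such that `F (∑ αᵢ uᵢ) - F 0 = ∑ fᵢ (αᵢ) wᵢ`. -/
theorem affine_additive_of_five_directions_R3
    (v : Fin 5 → (Fin 3 → ℝ))
    (hv : ∀ s : Finset (Fin 5), s.card = 3 →
      LinearIndependent ℝ (fun i : s => v i.1))
    (F : (Fin 3 → ℝ) → (Fin 3 → ℝ))
    (hinj : Function.Injective F)
    (honto : ∀ (i : Fin 5) (a : Fin 3 → ℝ), IsLine (F '' lineThru a (v i))) :
    (∃ (A : (Fin 3 → ℝ) → (Fin 3 → ℝ)) (c : Fin 3 → ℝ),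
      (∀ x y, A (x + y) = A x + A y) ∧ ∀ x, F x = A x + c) ∧
    ∃ (u w : Fin 3 → (Fin 3 → ℝ)) (f : Fin 3 → ℝ → ℝ),
      LinearIndependent ℝ u ∧ Submodule.span ℝ (Set.range u) = ⊤ ∧
      LinearIndependent ℝ w ∧ Submodule.span ℝ (Set.range w) = ⊤ ∧
      (∀ i, Function.Bijective (f i) ∧ (∀ a b : ℝ, f i (a + b) = f i a + f i b) ∧
        f i 1 = 1) ∧
      ∀ α : Fin 3 → ℝ, F (∑ i, α i • u i) - F 0 = ∑ i, f i (α i) • w i := by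
  obtain ⟨⟨A, c, hA⟩, u, w, f, hf, hF⟩ :=
    affine_additive_of_five_directions_R3_general (by simp) (by simp) hv hinj honto
  exact ⟨⟨A, c, map_add A, hA⟩, u, w, fun _ => f, u.linearIndependent, u.span_eq,
    w.linearIndependent, w.span_eq, fun _ => ⟨f.bijective, map_add f, hf⟩, hF⟩
end

section
/- Let n ≥ 2. Let p̄₁, ..., p̄ₙ, p̄_{n+1} ∈ ℝPⁿ be projective points in general position and let p̄_{n+2} ∈ ℝPⁿ be a projective point satisfying p̄_{n+2} ∉ s̄p{p̄₁, ..., p̄ₙ} and p̄_{n+2} ≠ p̄_{n+1}. Let F : ℝPⁿ → ℝPⁿ be an injective mapping that maps any projective line containing one of the points p̄₁, ..., p̄_{n+2} onto a projective line. Then F is a projective-linear mapping. -/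
open scoped LinearAlgebra.Projectivization

/-- A subset of `ℝPⁿ` (the projectivization of `ℝ^{n+1}`) is a projective line if it
consists of all projective points lying in a fixed two-dimensional linear subspace. -/
def IsProjLine {n : ℕ} (l : Set (ℙ ℝ (Fin (n + 1) → ℝ))) : Prop :=
  ∃ W : Submodule ℝ (Fin (n + 1) → ℝ), Module.finrank ℝ W = 2 ∧
    l = {p | p.submodule ≤ W}

/-- A self-map of `ℝPⁿ` is projective-linear if it is induced by an invertible linear
transformation of `ℝ^{n+1}`. -/
def IsProjLinear {n : ℕ} (F : ℙ ℝ (Fin (n + 1) → ℝ) → ℙ ℝ (Fin (n + 1) → ℝ)) : Prop :=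
  ∃ A : (Fin (n + 1) → ℝ) ≃ₗ[ℝ] (Fin (n + 1) → ℝ),
    F = Projectivization.map (A : (Fin (n + 1) → ℝ) →ₗ[ℝ] (Fin (n + 1) → ℝ)) A.injective

/-!
The theorem holds for spaces over arbitrary fields, up to an isomorphism of the fields; over `ℝ` the
isomorphism is the identity. Since `F` respects the lines through the basis points `p i`, it carries
the span of some of the `p i` and any further point onto the span of their images. In coordinates
with respect to the `p i` and the `F (p i)` this says that a lift `f` of `F` respects the vanishing
of each coordinate and the equality of the ratios of any two coordinates. Moving the two positions
of a ratio one at a time, through a third index, shows that all ratios are transformed by a single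
injective multiplicative map `g`, so `f` is, up to scalars, a diagonal scaling of `g` applied
coordinatewise. The lines through the additional point `r`, which has two nonzero coordinates, force
`g` to be additive.
-/

section ProjectivePoints

variable {K V : Type*} [DivisionRing K] [AddCommGroup V] [Module K V]

theorem coe_projectivization_submodule (x : ℙ K V) :
    (x.submodule.projectivization : Set (ℙ K V)) = {x} := by
  ext y
  rw [SetLike.mem_coe, Submodule.mem_projectivization_iff_submodule_le, Set.mem_singleton_iff]
  refine ⟨fun h => Projectivization.submodule_injective ?_, fun h => h ▸ le_rfl⟩
  exact Submodule.eq_of_le_of_finrank_eq h (by simp only [Projectivization.finrank_submodule])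

theorem finrank_sup_submodule_of_ne {x y : ℙ K V} (h : x ≠ y) :
    Module.finrank K ↥(x.submodule ⊔ y.submodule) = 2 := by
  have hli := Projectivization.linearIndependent_pair_iff_ne.2 h
  rw [x.submodule_eq, y.submodule_eq, ← Submodule.span_insert, ← Matrix.range_cons_cons_empty,
    finrank_span_eq_card hli, Fintype.card_fin]

theorem disjoint_submodule_iff {x : ℙ K V} {U : Submodule K V} :
    Disjoint x.submodule U ↔ x ∉ U.projectivization := by
  have hatom : IsAtom x.submodule := x.submodule_eq ▸ nonzero_span_atom _ x.rep_nonzero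
  rw [← hatom.not_le_iff_disjoint, Submodule.mem_projectivization_iff_submodule_le]

theorem coe_projectivization_sup (s : ℙ K V) (U : Submodule K V) :
    ((s.submodule ⊔ U).projectivization : Set (ℙ K V)) =
      insert s (⋃ q ∈ (U.projectivization : Set (ℙ K V)),
        ((s.submodule ⊔ q.submodule).projectivization : Set (ℙ K V))) := by
  ext x
  simp only [Set.mem_insert_iff, Set.mem_iUnion, SetLike.mem_coe, exists_prop]
  constructor
  · intro hx
    induction x with | h v hv
    obtain ⟨a, ha, u, hu, rfl⟩ := Submodule.mem_sup.1 hx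
    by_cases hu0 : u = 0
    · subst hu0
      left
      rw [← Set.mem_singleton_iff, ← coe_projectivization_submodule]
      exact (Submodule.mk_mem_projectivization_iff _ _).2 (by rwa [add_zero])
    · exact .inr ⟨.mk K u hu0, hu,
        Submodule.add_mem_sup ha (by simp [Submodule.mem_span_singleton_self])⟩
  · simp only [Submodule.mem_projectivization_iff_submodule_le]
    rintro (rfl | ⟨q, hq, hx⟩)
    · exact le_sup_left
    · exact hx.trans (sup_le_sup_left hq _)

end ProjectivePoints

section LinesThroughPoints

variable {K L V W ι : Type*} [DivisionRing K] [DivisionRing L] [AddCommGroup V] [Module K V]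
  [AddCommGroup W] [Module L W] {F : ℙ K V → ℙ L W} {s : ℙ K V} {p : ι → ℙ K V}

/-- `F` maps every projective line through the point `s` onto a projective line. A line is encoded
as the set of points of a two-dimensional submodule. -/
def MapsLinesThrough (F : ℙ K V → ℙ L W) (s : ℙ K V) : Prop :=
  ∀ U : Submodule K V, Module.finrank K U = 2 → s ∈ U.projectivization →
    ∃ U' : Submodule L W, Module.finrank L U' = 2 ∧
      F '' (U.projectivization : Set (ℙ K V)) = (U'.projectivization : Set (ℙ L W))

namespace MapsLinesThrough

theorem image_sup_submodule (hs : MapsLinesThrough F s)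
    (hF : Function.Injective F) (q : ℙ K V) :
    F '' ((s.submodule ⊔ q.submodule).projectivization : Set (ℙ K V)) =
      (((F s).submodule ⊔ (F q).submodule).projectivization : Set (ℙ L W)) := by
  rcases eq_or_ne s q with rfl | hsq
  · simp only [sup_idem, coe_projectivization_submodule, Set.image_singleton]
  have hs_mem : s ∈ (s.submodule ⊔ q.submodule).projectivization :=
    (Submodule.mem_projectivization_iff_submodule_le _ _).2 le_sup_left
  have hq_mem : q ∈ (s.submodule ⊔ q.submodule).projectivization :=
    (Submodule.mem_projectivization_iff_submodule_le _ _).2 le_sup_right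
  obtain ⟨U', hU', himage⟩ := hs _ (finrank_sup_submodule_of_ne hsq) hs_mem
  have hle : ∀ x ∈ (s.submodule ⊔ q.submodule).projectivization, (F x).submodule ≤ U' := by
    intro x hx
    rw [← Submodule.mem_projectivization_iff_submodule_le, ← SetLike.mem_coe, ← himage]
    exact Set.mem_image_of_mem F hx
  have : FiniteDimensional L U' := Module.finite_of_finrank_eq_succ hU'
  rw [himage, Submodule.eq_of_le_of_finrank_eq (sup_le (hle s hs_mem) (hle q hq_mem))
    (by rw [hU', finrank_sup_submodule_of_ne (hF.ne hsq)])]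

theorem image_sup (hs : MapsLinesThrough F s) (hF : Function.Injective F)
    {U : Submodule K V} {U' : Submodule L W}
    (hU : F '' (U.projectivization : Set (ℙ K V)) = (U'.projectivization : Set (ℙ L W))) :
    F '' ((s.submodule ⊔ U).projectivization : Set (ℙ K V)) =
      (((F s).submodule ⊔ U').projectivization : Set (ℙ L W)) := by
  rw [coe_projectivization_sup s, coe_projectivization_sup (F s), Set.image_insert_eq,
    Set.image_iUnion₂, ← hU, Set.biUnion_image]
  simp only [hs.image_sup_submodule hF]

theorem image_iSup_sup (hp : ∀ i, MapsLinesThrough F (p i)) (hF : Function.Injective F)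
    {U : Submodule K V} {U' : Submodule L W}
    (hU : F '' (U.projectivization : Set (ℙ K V)) = (U'.projectivization : Set (ℙ L W)))
    (I : Finset ι) :
    F '' (((⨆ i ∈ I, (p i).submodule) ⊔ U).projectivization : Set (ℙ K V)) =
      (((⨆ i ∈ I, (F (p i)).submodule) ⊔ U').projectivization : Set (ℙ L W)) := by
  classical
  induction I using Finset.induction_on with
  | empty => simpa using hU
  | insert i I _ ih =>
    rw [Finset.iSup_insert, Finset.iSup_insert, sup_assoc, sup_assoc]
    exact (hp i).image_sup hF ih

theorem image_iSup (hp : ∀ i, MapsLinesThrough F (p i)) (hF : Function.Injective F)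
    (I : Finset ι) :
    F '' ((⨆ i ∈ I, (p i).submodule).projectivization : Set (ℙ K V)) =
      ((⨆ i ∈ I, (F (p i)).submodule).projectivization : Set (ℙ L W)) := by
  simpa only [sup_bot_eq] using image_iSup_sup hp hF (U := ⊥) (U' := ⊥) (by simp) I

theorem independent_comp [Finite ι] (hp : ∀ i, MapsLinesThrough F (p i))
    (hF : Function.Injective F) (hind : Projectivization.Independent p) :
    Projectivization.Independent (F ∘ p) := by
  classical
  have := Fintype.ofFinite ι
  rw [Projectivization.independent_iff_iSupIndep] at hind ⊢
  intro i
  have hpi := disjoint_submodule_iff.1 (hind i)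
  refine disjoint_submodule_iff.2 ?_
  have himage := image_iSup hp hF (Finset.univ.erase i)
  simp only [Finset.mem_erase, Finset.mem_univ, and_true] at himage
  rwa [← SetLike.mem_coe, Function.comp_def, ← himage, hF.mem_set_image]

end MapsLinesThrough

end LinesThroughPoints

section VectorLift

variable {K L V W : Type*} [DivisionRing K] [DivisionRing L] [AddCommGroup V] [Module K V]
  [AddCommGroup W] [Module L W] {F : ℙ K V → ℙ L W}

open scoped Classical in
/-- A lift of `F : ℙ K V → ℙ L W` to the vector spaces: `0` is sent to `0`, and a nonzero vector to
the chosen representative of the image of its class. -/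
noncomputable def vectorLift (F : ℙ K V → ℙ L W) (v : V) : W :=
  if hv : v = 0 then 0 else (F (.mk K v hv)).rep

theorem vectorLift_zero (F : ℙ K V → ℙ L W) : vectorLift F 0 = 0 :=
  dif_pos rfl

theorem vectorLift_of_ne_zero (F : ℙ K V → ℙ L W) {v : V} (hv : v ≠ 0) :
    vectorLift F v = (F (.mk K v hv)).rep :=
  dif_neg hv

theorem submodule_map_eq_span_vectorLift (F : ℙ K V → ℙ L W) (x : ℙ K V) :
    (F x).submodule = L ∙ vectorLift F x.rep := by
  rw [vectorLift_of_ne_zero F x.rep_nonzero, x.mk_rep, Projectivization.submodule_eq]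

theorem image_projectivization_span_singleton (F : ℙ K V → ℙ L W) (v : V) :
    F '' ((K ∙ v).projectivization : Set (ℙ K V)) =
      ((L ∙ vectorLift F v).projectivization : Set (ℙ L W)) := by
  rcases eq_or_ne v 0 with rfl | hv
  · simp [vectorLift_zero]
  · rw [← Projectivization.submodule_mk v hv, coe_projectivization_submodule, Set.image_singleton,
      vectorLift_of_ne_zero F hv, ← Projectivization.submodule_eq, coe_projectivization_submodule]

theorem vectorLift_mem_iff (hF : Function.Injective F) {U : Submodule K V} {U' : Submodule L W}
    (hU : F '' (U.projectivization : Set (ℙ K V)) = (U'.projectivization : Set (ℙ L W))) {v : V} :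
    vectorLift F v ∈ U' ↔ v ∈ U := by
  rcases eq_or_ne v 0 with rfl | hv
  · simp only [vectorLift_zero, zero_mem]
  rw [vectorLift_of_ne_zero F hv, ← Submodule.mk_mem_projectivization_iff U hv,
    ← SetLike.mem_coe (p := U.projectivization), ← hF.mem_set_image, hU, SetLike.mem_coe,
    Submodule.mem_projectivization_iff_submodule_le, Projectivization.submodule_eq,
    Submodule.span_singleton_le_iff_mem]

theorem exists_eq_smul_vectorLift {U : Submodule K V} {U' : Submodule L W}
    (hU : F '' (U.projectivization : Set (ℙ K V)) = (U'.projectivization : Set (ℙ L W))) {w : W}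
    (hw : w ∈ U') : ∃ v ∈ U, ∃ ν : L, w = ν • vectorLift F v := by
  rcases eq_or_ne w 0 with rfl | hw0
  · exact ⟨0, zero_mem U, 0, (zero_smul L _).symm⟩
  obtain ⟨x, hx, hFx⟩ : Projectivization.mk L w hw0 ∈ F '' (U.projectivization : Set (ℙ K V)) :=
    hU ▸ (Submodule.mk_mem_projectivization_iff U' hw0).2 hw
  have hw_span : w ∈ (F x).submodule := by
    rw [hFx, Projectivization.submodule_mk]
    exact Submodule.mem_span_singleton_self w
  rw [submodule_map_eq_span_vectorLift] at hw_span
  obtain ⟨ν, hν⟩ := Submodule.mem_span_singleton.1 hw_span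
  refine ⟨x.rep, ?_, ν, hν.symm⟩
  rwa [← Submodule.mk_mem_projectivization_iff U x.rep_nonzero, x.mk_rep]

theorem eq_map_of_vectorLift_eq_smul {σ : K →+* L} {A : V →ₛₗ[σ] W} (hA : Function.Injective A)
    (h : ∀ v, ∃ μ : L, μ ≠ 0 ∧ vectorLift F v = μ • A v) : F = Projectivization.map A hA := by
  ext x
  obtain ⟨μ, hμ, hx⟩ := h x.rep
  refine Projectivization.submodule_injective ?_
  rw [submodule_map_eq_span_vectorLift, hx, Submodule.span_singleton_smul_eq hμ.isUnit,
    ← Projectivization.submodule_mk _ ((map_ne_zero_iff A hA).2 x.rep_nonzero),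
    ← Projectivization.map_mk A hA _ x.rep_nonzero, x.mk_rep]

end VectorLift

section Coordinates

variable {K V ι : Type*} [DivisionRing K] [AddCommGroup V] [Module K V] [Fintype ι]
  {p : ι → ℙ K V}

/-- The vector with given coordinates with respect to the representatives of the points `p i`. -/
noncomputable def ofCoords (p : ι → ℙ K V) : (ι → K) →ₗ[K] V :=
  Fintype.linearCombination K fun i => (p i).rep

theorem ofCoords_injective (hp : Projectivization.Independent p) :
    Function.Injective (ofCoords p) :=
  linearIndependent_iff_injective_fintypeLinearCombination.1
    (Projectivization.independent_iff.1 hp)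

theorem range_ofCoords (p : ι → ℙ K V) :
    LinearMap.range (ofCoords p) = ⨆ i, (p i).submodule := by
  simp only [ofCoords, Fintype.range_linearCombination, Submodule.span_range_eq_iSup,
    Projectivization.submodule_eq]

theorem map_ofCoords_iInf_ker_proj (p : ι → ℙ K V) (I : Finset ι) :
    (⨅ i ∈ (I : Set ι)ᶜ, LinearMap.ker (LinearMap.proj (R := K) (φ := fun _ : ι => K) i)).map
      (ofCoords p) = ⨆ i ∈ I, (p i).submodule := by
  classical
  rw [← LinearMap.iSup_range_single_eq_iInf_ker_proj K (fun _ => K) isCompl_compl I.finite_toSet]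
  have hsingle (i : ι) : (LinearMap.range (LinearMap.single K (fun _ => K) i)).map (ofCoords p) =
      (p i).submodule := by
    have hcomp : ofCoords p ∘ₗ LinearMap.single K (fun _ => K) i =
        LinearMap.toSpanSingleton K V (p i).rep := by
      ext
      simp [ofCoords]
    rw [← LinearMap.range_comp, hcomp, LinearMap.range_toSpanSingleton,
      Projectivization.submodule_eq]
  simp only [Submodule.map_iSup, hsingle, Finset.mem_coe]

theorem ofCoords_mem_iSup_sup_iff (hp : Projectivization.Independent p) (I : Finset ι)
    (x y : ι → K) :
    ofCoords p x ∈ (⨆ i ∈ I, (p i).submodule) ⊔ K ∙ ofCoords p y ↔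
      ∃ β : K, ∀ i ∉ I, x i = β * y i := by
  rw [← map_ofCoords_iInf_ker_proj, ← Set.image_singleton, ← Submodule.map_span,
    ← Submodule.map_sup, ← Submodule.mem_comap,
    Submodule.comap_map_eq_of_injective (ofCoords_injective hp), Submodule.mem_sup]
  simp only [Submodule.mem_span_singleton, Submodule.mem_iInf, LinearMap.mem_ker,
    LinearMap.proj_apply, Set.mem_compl_iff, Finset.mem_coe, exists_exists_eq_and]
  constructor
  · rintro ⟨z, hz, β, rfl⟩
    exact ⟨β, fun i hi => by simp [hz i hi]⟩
  · rintro ⟨β, hβ⟩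
    exact ⟨x - β • y, fun i hi => by simp [hβ i hi], β, sub_add_cancel _ _⟩

theorem ofCoords_mem_iSup_iff (hp : Projectivization.Independent p) (I : Finset ι) (x : ι → K) :
    ofCoords p x ∈ ⨆ i ∈ I, (p i).submodule ↔ ∀ i ∉ I, x i = 0 := by
  simpa using ofCoords_mem_iSup_sup_iff hp I x 0

theorem exists_ne_zero_of_ofCoords_eq_rep (hind : Projectivization.Independent p) {r : ℙ K V}
    {ρ : ι → K} (hρ : ofCoords p ρ = r.rep) {i : ι} (hr : r ≠ p i) : ∃ j ≠ i, ρ j ≠ 0 := by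
  by_contra! h
  have hmem := (ofCoords_mem_iSup_iff hind {i} ρ).2 fun j hj => h j (by simpa using hj)
  rw [Finset.iSup_singleton, hρ, ← Submodule.mk_mem_projectivization_iff _ r.rep_nonzero, r.mk_rep,
    ← SetLike.mem_coe, coe_projectivization_submodule] at hmem
  exact hr hmem

end Coordinates

theorem map_neg_one_of_bijective {R S : Type*} [Ring R] [NoZeroDivisors R] [Ring S]
    [NoZeroDivisors S] {g : R →* S} (hg : Function.Bijective g) : g (-1) = -1 := by
  obtain ⟨u, hu⟩ := hg.2 (-1)
  have hu_sq : u * u = 1 := hg.1 (by rw [map_mul, hu, neg_mul_neg, one_mul, map_one])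
  rcases mul_self_eq_one_iff.1 hu_sq with rfl | rfl
  · have hneg_sq : g (-1) * g (-1) = 1 := by rw [← map_mul, neg_mul_neg, one_mul, map_one]
    rw [map_one] at hu
    exact (mul_self_eq_one_iff.1 hneg_sq).elim (fun h => h.trans hu) id
  · exact hu

section MultiplicativeToAdditive

open scoped Cardinal

variable {K L ι : Type*} [DivisionRing K] [DivisionRing L]

theorem map_add_of_map_one_add {g : K →*₀ L} (hg : ∀ t, g (1 + t) = 1 + g t) (s t : K) :
    g (s + t) = g s + g t := by
  rcases eq_or_ne s 0 with rfl | hs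
  · rw [zero_add, map_zero, zero_add]
  calc
    g (s + t) = g s * g (1 + s⁻¹ * t) := by
      rw [← map_mul, mul_add, mul_one, mul_inv_cancel_left₀ hs]
    _ = g s + g t := by rw [hg, mul_add, mul_one, ← map_mul, mul_inv_cancel_left₀ hs]

theorem exists_ne_zero_map_add_eq {g : K →*₀ L} (hg : Function.Bijective g) (s : K) :
    ∃ t ≠ 0, g (s + t) = g s + g t := by
  rcases eq_or_ne s 0 with rfl | hs
  · exact ⟨1, one_ne_zero, by rw [zero_add, map_zero, zero_add]⟩
  · have hg_neg_one : g (-1) = -1 := map_neg_one_of_bijective (g := (g : K →* L)) hg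
    refine ⟨-s, neg_ne_zero.2 hs, ?_⟩
    rw [add_neg_cancel, map_zero, ← neg_one_mul, map_mul, hg_neg_one, neg_one_mul,
      add_neg_cancel]

/-- The coordinate `a` of `ρ + x` forces the coefficient of `g ∘ ρ` to be `1`, the third coordinate
forces that of `g ∘ x` to be `1`, and the coordinate `b` is then the additivity of `g`. -/
theorem map_add_of_exists_comp_add_eq {g : K →*₀ L} (hg : Function.Bijective g) (hι : 3 ≤ #ι)
    {ρ : ι → K} {a b : ι} (hab : a ≠ b) (ha : ρ a ≠ 0) (hb : ρ b ≠ 0)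
    (hρ : ∀ x : ι → K, ∃ α β : L, g ∘ (ρ + x) = α • (g ∘ ρ) + β • (g ∘ x)) (s t : K) :
    g (s + t) = g s + g t := by
  classical
  refine map_add_of_map_one_add (fun t => ?_) s t
  obtain ⟨k, hka, hkb⟩ := Cardinal.exists_ne_ne_of_three_le hι a b
  obtain ⟨z, hz, hgz⟩ := exists_ne_zero_map_add_eq hg (ρ k)
  obtain ⟨α, β, h⟩ := hρ (Pi.single b (ρ b * t) + Pi.single k z)
  have hα : α = 1 := by
    simpa [hab, hab.symm, hka.symm, ha] using congrFun h a
  have hβ : β = 1 := by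
    simpa [hka, hkb, hgz, hα, hz] using congrFun h k
  have hgb : g (ρ b + ρ b * t) = g (ρ b) + g (ρ b) * g t := by
    simpa [hkb.symm, hα, hβ] using congrFun h b
  have hgρ : g (ρ b) ≠ 0 := (map_ne_zero g).2 hb
  refine mul_left_cancel₀ hgρ ?_
  rw [← map_mul, mul_add, mul_one, hgb, mul_add, mul_one]

end MultiplicativeToAdditive

section CoordinateRatios

open scoped Cardinal

variable {K L ι : Type*} [Field K] [Field L]

/-- `f` preserves and reflects the vanishing of each coordinate, and the equality of the ratios of
any two coordinates; the latter is written as a cross product so that it makes sense when some of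
the coordinates vanish. -/
structure PreservesCoordRatios (f : (ι → K) → ι → L) : Prop where
  apply_eq_zero_iff : ∀ x i, f x i = 0 ↔ x i = 0
  mul_eq_mul_iff : ∀ x y j k, f x j * f y k = f x k * f y j ↔ x j * y k = x k * y j

namespace PreservesCoordRatios

variable {f : (ι → K) → ι → L}

theorem apply_ne_zero (h : PreservesCoordRatios f) {x : ι → K} {i : ι} (hx : x i ≠ 0) :
    f x i ≠ 0 :=
  (h.apply_eq_zero_iff x i).not.2 hx

theorem div_eq_div_iff (h : PreservesCoordRatios f) {x y : ι → K} {j k : ι} (hx : x k ≠ 0)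
    (hy : y k ≠ 0) : f x j / f x k = f y j / f y k ↔ x j / x k = y j / y k := by
  rw [_root_.div_eq_div_iff (h.apply_ne_zero hx) (h.apply_ne_zero hy),
    _root_.div_eq_div_iff hx hy, mul_comm (f y j), mul_comm (y j), h.mul_eq_mul_iff]

theorem div_apply_one (h : PreservesCoordRatios f) :
    PreservesCoordRatios fun x => f x / f 1 where
  apply_eq_zero_iff x i := by
    simp only [Pi.div_apply, div_eq_zero_iff, h.apply_eq_zero_iff, Pi.one_apply, one_ne_zero,
      or_false]
  mul_eq_mul_iff x y j k := by
    have hne (i : ι) : f 1 i ≠ 0 := h.apply_ne_zero one_ne_zero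
    rw [← h.mul_eq_mul_iff, Pi.div_apply, Pi.div_apply, Pi.div_apply, Pi.div_apply,
      div_mul_div_comm, div_mul_div_comm, mul_comm (f 1 k) (f 1 j),
      div_left_inj' (mul_ne_zero (hne j) (hne k))]

theorem apply_eq_apply (h : PreservesCoordRatios f) (h1 : f 1 = 1) {x : ι → K} {j k : ι}
    (hx : x j = x k) : f x j = f x k := by
  simpa [h1, hx] using h.mul_eq_mul_iff x 1 j k

theorem div_eq_div_of_denominator (h : PreservesCoordRatios f) (h1 : f 1 = 1) {x y : ι → K}
    {j j' k : ι} (hj : j ≠ k) (hj' : j' ≠ k) (hx : x k ≠ 0) (hy : y k ≠ 0)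
    (hxy : x j / x k = y j' / y k) : f x j / f x k = f y j' / f y k := by
  classical
  let u : ι → K := Function.update (Function.const ι (x j / x k)) k 1
  have hu : u k = 1 := Function.update_self ..
  have hu_ne {i : ι} (hi : i ≠ k) : u i = x j / x k := Function.update_of_ne hi ..
  have huk : u k ≠ 0 := hu ▸ one_ne_zero
  calc
    f x j / f x k = f u j / f u k := (h.div_eq_div_iff hx huk).2 (by rw [hu_ne hj, hu, div_one])
    _ = f u j' / f u k := by rw [h.apply_eq_apply h1 ((hu_ne hj).trans (hu_ne hj').symm)]
    _ = f y j' / f y k :=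
      (h.div_eq_div_iff huk hy).2 (by rw [hu_ne hj', hu, div_one, hxy])

theorem div_eq_div_of_numerator (h : PreservesCoordRatios f) (h1 : f 1 = 1) {x y : ι → K}
    {j k k' : ι} (hk : k ≠ j) (hk' : k' ≠ j) (hx : x k ≠ 0) (hy : y k' ≠ 0)
    (hxy : x j / x k = y j / y k') : f x j / f x k = f y j / f y k' := by
  classical
  let u : ι → K := Function.update 1 j (x j / x k)
  have hu : u j = x j / x k := Function.update_self ..
  have hu_ne {i : ι} (hi : i ≠ j) : u i = 1 := Function.update_of_ne hi ..
  have hu0 {i : ι} (hi : i ≠ j) : u i ≠ 0 := hu_ne hi ▸ one_ne_zero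
  calc
    f x j / f x k = f u j / f u k :=
      (h.div_eq_div_iff hx (hu0 hk)).2 (by rw [hu, hu_ne hk, div_one])
    _ = f u j / f u k' := by rw [h.apply_eq_apply h1 ((hu_ne hk).trans (hu_ne hk').symm)]
    _ = f y j / f y k' :=
      (h.div_eq_div_iff (hu0 hk') hy).2 (by rw [hu, hu_ne hk', div_one, hxy])

theorem div_eq_div (h : PreservesCoordRatios f) (h1 : f 1 = 1) (hι : 3 ≤ #ι) {x y : ι → K}
    {j k j' k' : ι} (hx : x k ≠ 0) (hy : y k' ≠ 0) (hxy : x j / x k = y j' / y k') :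
    f x j / f x k = f y j' / f y k' := by
  classical
  by_cases ht : x j / x k = 1
  · have hxjk : x j = x k := (div_eq_one_iff_eq hx).1 ht
    have hyjk : y j' = y k' := (div_eq_one_iff_eq hy).1 (hxy ▸ ht)
    rw [h.apply_eq_apply h1 hxjk, h.apply_eq_apply h1 hyjk, div_self (h.apply_ne_zero hx),
      div_self (h.apply_ne_zero hy)]
  have hjk : j ≠ k := by rintro rfl; exact ht (div_self hx)
  have hjk' : j' ≠ k' := by rintro rfl; exact ht (hxy.trans (div_self hy))
  obtain ⟨i, hik, hik'⟩ := Cardinal.exists_ne_ne_of_three_le hι k k'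
  let u : ι → K := Function.update 1 i (x j / x k)
  have hu : u i = x j / x k := Function.update_self ..
  have hu_ne {m : ι} (hm : i ≠ m) : u m = 1 := Function.update_of_ne hm.symm ..
  have hu0 {m : ι} (hm : i ≠ m) : u m ≠ 0 := hu_ne hm ▸ one_ne_zero
  calc
    f x j / f x k = f u i / f u k :=
      h.div_eq_div_of_denominator h1 hjk hik hx (hu0 hik) (by rw [hu, hu_ne hik, div_one])
    _ = f u i / f u k' := h.div_eq_div_of_numerator h1 hik.symm hik'.symm (hu0 hik) (hu0 hik')
      (by rw [hu_ne hik, hu_ne hik'])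
    _ = f y j' / f y k' :=
      h.div_eq_div_of_denominator h1 hik' hjk' (hu0 hik') hy (by rw [hu, hu_ne hik', div_one, hxy])

theorem exists_monoidWithZeroHom (h : PreservesCoordRatios f) (h1 : f 1 = 1) (hι : 3 ≤ #ι) :
    ∃ g : K →*₀ L, Function.Injective g ∧
      ∀ x j k, x k ≠ 0 → f x j / f x k = g (x j / x k) := by
  classical
  obtain ⟨c⟩ : Nonempty ι := Cardinal.mk_ne_zero_iff.1 (zero_lt_three.trans_le hι).ne'
  obtain ⟨a, hac, -⟩ := Cardinal.exists_ne_ne_of_three_le hι c c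
  obtain ⟨b, hba, hbc⟩ := Cardinal.exists_ne_ne_of_three_le hι a c
  let u (t : K) : ι → K := Function.update 1 a t
  have hua (t : K) : u t a = t := Function.update_self ..
  have huc (t : K) : u t c = 1 := Function.update_of_ne hac.symm ..
  have huc_ne (t : K) : u t c ≠ 0 := huc t ▸ one_ne_zero
  let g (t : K) : L := f (u t) a / f (u t) c
  have hg (x : ι → K) (j k : ι) (hx : x k ≠ 0) : f x j / f x k = g (x j / x k) :=
    h.div_eq_div h1 hι hx (huc_ne _) (by rw [hua, huc, div_one])
  have g_zero : g 0 = 0 := by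
    simp only [g, (h.apply_eq_zero_iff (u 0) a).2 (hua 0), zero_div]
  have g_one : g 1 = 1 := by
    simp only [g, u, Function.update_one, h1, Pi.one_apply, div_one]
  have g_mul (s t : K) : g (s * t) = g s * g t := by
    rcases eq_or_ne t 0 with rfl | ht
    · rw [mul_zero, g_zero, mul_zero]
    let v : ι → K := Function.update (u (s * t)) b t
    have hva : v a = s * t := (Function.update_of_ne hba.symm ..).trans (hua _)
    have hvb : v b = t := Function.update_self ..
    have hvc : v c = 1 := (Function.update_of_ne hbc.symm ..).trans (huc _)
    have hvb_ne : v b ≠ 0 := hvb ▸ ht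
    have hvc_ne : v c ≠ 0 := hvc ▸ one_ne_zero
    calc
      g (s * t) = f v a / f v c := by rw [hg v a c hvc_ne, hva, hvc, div_one]
      _ = f v a / f v b * (f v b / f v c) := (div_mul_div_cancel₀ (h.apply_ne_zero hvb_ne)).symm
      _ = g s * g t := by
        rw [hg v a b hvb_ne, hg v b c hvc_ne, hva, hvb, hvc, mul_div_cancel_right₀ s ht, div_one]
  refine ⟨⟨⟨g, g_zero⟩, g_one, g_mul⟩, fun s t hst => ?_, hg⟩
  simpa only [hua, huc, div_one] using (h.div_eq_div_iff (huc_ne s) (huc_ne t)).1 hst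

theorem exists_eq_smul_comp (h : PreservesCoordRatios f) (hι : 3 ≤ #ι) :
    ∃ g : K →*₀ L, Function.Injective g ∧ ∀ x, ∃ μ : L, μ ≠ 0 ∧ f x = μ • (f 1 * (g ∘ x)) := by
  have h1 (i : ι) : f 1 i ≠ 0 := h.apply_ne_zero one_ne_zero
  obtain ⟨g, hg_inj, hg⟩ :=
    h.div_apply_one.exists_monoidWithZeroHom (funext fun i => div_self (h1 i)) hι
  refine ⟨g, hg_inj, fun x => ?_⟩
  by_cases hx : x = 0
  · exact ⟨1, one_ne_zero, by ext i; simp [hx, (h.apply_eq_zero_iff 0 i).2 rfl]⟩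
  obtain ⟨k, hk⟩ := Function.ne_iff.1 hx
  refine ⟨f x k / f 1 k / g (x k), ?_, ?_⟩
  · exact div_ne_zero (div_ne_zero (h.apply_ne_zero hk) (h1 k)) ((map_ne_zero g).2 hk)
  ext j
  have hjk := hg x j k hk
  have hgk : g (x k) ≠ 0 := (map_ne_zero g).2 hk
  have hfk : f x k ≠ 0 := h.apply_ne_zero hk
  simp only [Pi.div_apply, map_div₀, Pi.smul_apply, Pi.mul_apply, smul_eq_mul,
    Function.comp_apply] at hjk ⊢
  field_simp [h1 j, h1 k] at hjk ⊢
  linear_combination hjk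

/-- The vector `f 1 * Function.update 1 a l` has to be hit up to a scalar, which is then read off at
another index. -/
theorem surjective_of_eq_smul {g : K →*₀ L} [Nontrivial ι] (h : PreservesCoordRatios f)
    (hg : ∀ x, ∃ μ : L, μ ≠ 0 ∧ f x = μ • (f 1 * (g ∘ x)))
    (hsurj : ∀ y, ∃ x, ∃ ν : L, y = ν • f x) : Function.Surjective g := by
  classical
  intro l
  obtain ⟨a, b, hab⟩ := exists_pair_ne ι
  obtain ⟨x, ν, hx⟩ := hsurj (f 1 * Function.update (1 : ι → L) a l)
  obtain ⟨μ, -, hμ⟩ := hg x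
  have h1 (i : ι) : f 1 i ≠ 0 := h.apply_ne_zero one_ne_zero
  rw [hμ] at hx
  have hxa : l = ν * μ * g (x a) := mul_left_cancel₀ (h1 a) <| by
    simpa [mul_assoc, mul_left_comm] using congrFun hx a
  have hxb : (1 : L) = ν * μ * g (x b) := mul_left_cancel₀ (h1 b) <| by
    simpa [hab.symm, mul_assoc, mul_left_comm] using congrFun hx b
  refine ⟨x a / x b, ?_⟩
  rw [map_div₀, hxa, ← mul_div_mul_left _ _ (left_ne_zero_of_mul_eq_one hxb.symm), ← hxb, div_one]

theorem exists_comp_add_eq {g : K →*₀ L} (h : PreservesCoordRatios f)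
    (hg : ∀ x, ∃ μ : L, μ ≠ 0 ∧ f x = μ • (f 1 * (g ∘ x))) {ρ x : ι → K}
    (hadd : ∃ α β : L, f (ρ + x) = α • f ρ + β • f x) :
    ∃ α β : L, g ∘ (ρ + x) = α • (g ∘ ρ) + β • (g ∘ x) := by
  obtain ⟨α, β, hαβ⟩ := hadd
  obtain ⟨μ, hμ, hμf⟩ := hg (ρ + x)
  obtain ⟨μ₁, -, hμ₁⟩ := hg ρ
  obtain ⟨μ₂, -, hμ₂⟩ := hg x
  rw [hμf, hμ₁, hμ₂] at hαβ
  refine ⟨α * μ₁ / μ, β * μ₂ / μ, funext fun i => ?_⟩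
  have h1 : f 1 i ≠ 0 := h.apply_ne_zero one_ne_zero
  have hi := congrFun hαβ i
  simp only [Pi.add_apply, Pi.smul_apply, Pi.mul_apply, Function.comp_apply, smul_eq_mul] at hi ⊢
  field_simp
  refine mul_left_cancel₀ h1 ?_
  linear_combination hi

theorem exists_ringEquiv (h : PreservesCoordRatios f) (hι : 3 ≤ #ι)
    (hsurj : ∀ y, ∃ x, ∃ ν : L, y = ν • f x) {ρ : ι → K} {a b : ι} (hab : a ≠ b) (ha : ρ a ≠ 0)
    (hb : ρ b ≠ 0) (hadd : ∀ x, ∃ α β : L, f (ρ + x) = α • f ρ + β • f x) :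
    ∃ σ : K ≃+* L, ∀ x, ∃ μ : L, μ ≠ 0 ∧ f x = μ • (f 1 * (σ ∘ x)) := by
  have : Nontrivial ι := ⟨a, b, hab⟩
  obtain ⟨g, hg_inj, hg⟩ := h.exists_eq_smul_comp hι
  have hg_bij : Function.Bijective g := ⟨hg_inj, h.surjective_of_eq_smul hg hsurj⟩
  have hg_add := map_add_of_exists_comp_add_eq hg_bij hι hab ha hb fun x =>
    h.exists_comp_add_eq hg (hadd x)
  exact ⟨.ofBijective (⟨g, map_zero g, hg_add⟩ : K →+* L) hg_bij, hg⟩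

end PreservesCoordRatios

end CoordinateRatios

section CoordinateMap

variable {K L V W ι : Type*} [DivisionRing K] [DivisionRing L] [AddCommGroup V]
  [Module K V] [AddCommGroup W] [Module L W] [Fintype ι] {F : ℙ K V → ℙ L W} {p : ι → ℙ K V}
  {f : (ι → K) → ι → L}

/-- `f` is the expression in coordinates of the lift of `F` to the vector spaces, with respect to
the points `p i` in the source and their images `F (p i)` in the target. -/
def IsCoordMap (F : ℙ K V → ℙ L W) (p : ι → ℙ K V) (f : (ι → K) → ι → L) : Prop :=
  ∀ x, ofCoords (F ∘ p) (f x) = vectorLift F (ofCoords p x)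

theorem exists_isCoordMap (hp : ∀ i, MapsLinesThrough F (p i)) (hF : Function.Injective F) :
    ∃ f, IsCoordMap F p f := by
  have himage := MapsLinesThrough.image_iSup hp hF Finset.univ
  simp only [Finset.mem_univ, iSup_pos] at himage
  have hmem (x : ι → K) : vectorLift F (ofCoords p x) ∈ LinearMap.range (ofCoords (F ∘ p)) := by
    rw [range_ofCoords]
    exact (vectorLift_mem_iff hF himage).2 (range_ofCoords p ▸ LinearMap.mem_range_self _ x)
  choose f hf using hmem
  exact ⟨f, hf⟩

namespace IsCoordMap

theorem exists_forall_notMem_eq_mul_iff (hf : IsCoordMap F p f)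
    (hp : ∀ i, MapsLinesThrough F (p i)) (hF : Function.Injective F)
    (hind : Projectivization.Independent p) (I : Finset ι) (x y : ι → K) :
    (∃ β, ∀ i ∉ I, f x i = β * f y i) ↔ ∃ β, ∀ i ∉ I, x i = β * y i := by
  rw [← ofCoords_mem_iSup_sup_iff (MapsLinesThrough.independent_comp hp hF hind), hf, hf,
    ← ofCoords_mem_iSup_sup_iff hind]
  exact vectorLift_mem_iff hF
    (MapsLinesThrough.image_iSup_sup hp hF (image_projectivization_span_singleton F _) I)

theorem apply_eq_zero_iff (hf : IsCoordMap F p f) (hp : ∀ i, MapsLinesThrough F (p i))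
    (hF : Function.Injective F) (hind : Projectivization.Independent p) (x : ι → K) (i : ι) :
    f x i = 0 ↔ x i = 0 := by
  classical
  have hf_zero : f 0 = 0 := ofCoords_injective (MapsLinesThrough.independent_comp hp hF hind) <| by
    rw [hf, map_zero, vectorLift_zero, map_zero]
  simpa [hf_zero] using hf.exists_forall_notMem_eq_mul_iff hp hF hind {i}ᶜ x 0

theorem exists_eq_smul (hf : IsCoordMap F p f) (hp : ∀ i, MapsLinesThrough F (p i))
    (hF : Function.Injective F) (hind : Projectivization.Independent p) (y : ι → L) :
    ∃ x, ∃ ν : L, y = ν • f x := by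
  have himage := MapsLinesThrough.image_iSup hp hF Finset.univ
  simp only [Finset.mem_univ, iSup_pos] at himage
  have hy : ofCoords (F ∘ p) y ∈ ⨆ i, (F (p i)).submodule :=
    range_ofCoords (F ∘ p) ▸ LinearMap.mem_range_self _ y
  obtain ⟨v, hv, ν, hν⟩ := exists_eq_smul_vectorLift himage hy
  rw [← range_ofCoords] at hv
  obtain ⟨x, rfl⟩ := hv
  refine ⟨x, ν, ofCoords_injective (MapsLinesThrough.independent_comp hp hF hind) ?_⟩
  rw [hν, map_smul, hf]

theorem exists_add_eq (hf : IsCoordMap F p f) (hp : ∀ i, MapsLinesThrough F (p i))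
    (hF : Function.Injective F) (hind : Projectivization.Independent p) {r : ℙ K V}
    (hr : MapsLinesThrough F r) {ρ : ι → K} (hρ : ofCoords p ρ = r.rep) (x : ι → K) :
    ∃ α β : L, f (ρ + x) = α • f ρ + β • f x := by
  have himage := hr.image_sup hF (image_projectivization_span_singleton F (ofCoords p x))
  rw [r.submodule_eq, submodule_map_eq_span_vectorLift, ← hρ] at himage
  have hmem : vectorLift F (ofCoords p (ρ + x)) ∈ _ := (vectorLift_mem_iff hF himage).2 <| by
    rw [map_add]
    exact Submodule.add_mem_sup (Submodule.mem_span_singleton_self _)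
      (Submodule.mem_span_singleton_self _)
  rw [← hf, ← hf, ← hf, ← Submodule.span_insert, Submodule.mem_span_pair] at hmem
  obtain ⟨α, β, h⟩ := hmem
  refine ⟨α, β, ofCoords_injective (MapsLinesThrough.independent_comp hp hF hind) ?_⟩
  rw [← h, map_add, map_smul, map_smul]

end IsCoordMap

end CoordinateMap

section CoordinateMapField

variable {K L V W ι : Type*} [Field K] [Field L] [AddCommGroup V] [Module K V]
  [AddCommGroup W] [Module L W] [Fintype ι] {F : ℙ K V → ℙ L W} {p : ι → ℙ K V}
  {f : (ι → K) → ι → L}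

theorem exists_eq_mul_and_eq_mul_iff {a b c d : K} (h : c ≠ 0 ∨ d ≠ 0) :
    (∃ t, a = t * c ∧ b = t * d) ↔ a * d = b * c := by
  constructor
  · rintro ⟨t, rfl, rfl⟩
    rw [mul_assoc, mul_assoc, mul_comm c]
  · intro heq
    rcases h with hc | hd
    · exact ⟨a / c, (div_mul_cancel₀ a hc).symm, by rw [div_mul_eq_mul_div, heq,
        mul_div_cancel_right₀ b hc]⟩
    · exact ⟨b / d, by rw [div_mul_eq_mul_div, ← heq, mul_div_cancel_right₀ a hd],
        (div_mul_cancel₀ b hd).symm⟩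

namespace IsCoordMap

theorem preservesCoordRatios (hf : IsCoordMap F p f) (hp : ∀ i, MapsLinesThrough F (p i))
    (hF : Function.Injective F) (hind : Projectivization.Independent p) :
    PreservesCoordRatios f where
  apply_eq_zero_iff := hf.apply_eq_zero_iff hp hF hind
  mul_eq_mul_iff x y j k := by
    classical
    by_cases hy : y j ≠ 0 ∨ y k ≠ 0
    · have hfy : f y j ≠ 0 ∨ f y k ≠ 0 := by
        simpa only [ne_eq, hf.apply_eq_zero_iff hp hF hind] using hy
      rw [← exists_eq_mul_and_eq_mul_iff hfy, ← exists_eq_mul_and_eq_mul_iff hy]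
      simpa only [Finset.mem_compl, not_not, Finset.mem_insert, Finset.mem_singleton,
        forall_eq_or_imp, forall_eq] using
        hf.exists_forall_notMem_eq_mul_iff hp hF hind {j, k}ᶜ x y
    · push Not at hy
      simp only [hy.1, hy.2, (hf.apply_eq_zero_iff hp hF hind y _).2, mul_zero]

theorem exists_eq_map (hf : IsCoordMap F p f) (hind : Projectivization.Independent p)
    (hspan : ⨆ i, (p i).submodule = ⊤) (hind' : Projectivization.Independent (F ∘ p))
    {σ : K →+* L} {c : ι → L} (hc : ∀ i, c i ≠ 0)
    (hσ : ∀ x, ∃ μ : L, μ ≠ 0 ∧ f x = μ • (c * (σ ∘ x))) :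
    ∃ (A : V →ₛₗ[σ] W) (hA : Function.Injective A), F = Projectivization.map A hA := by
  let e : (ι → K) ≃ₗ[K] V := .ofBijective (ofCoords p) ⟨ofCoords_injective hind,
    LinearMap.range_eq_top.1 ((range_ofCoords p).trans hspan)⟩
  let B : (ι → K) →ₛₗ[σ] (ι → L) :=
    { toFun x := c * (σ ∘ x)
      map_add' x y := by ext i; simp [mul_add]
      map_smul' a x := by ext i; simp [mul_left_comm] }
  have hB : Function.Injective B := fun x y hxy => funext fun i =>
    σ.injective (mul_left_cancel₀ (hc i) (congrFun hxy i))
  let A : V →ₛₗ[σ] W := ofCoords (F ∘ p) ∘ₛₗ B ∘ₛₗ (e.symm : V →ₗ[K] ι → K)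
  have hA : Function.Injective A :=
    (ofCoords_injective hind').comp (hB.comp e.symm.injective)
  refine ⟨A, hA, eq_map_of_vectorLift_eq_smul hA fun v => ?_⟩
  obtain ⟨μ, hμ, h⟩ := hσ (e.symm v)
  refine ⟨μ, hμ, ?_⟩
  calc
    vectorLift F v = ofCoords (F ∘ p) (f (e.symm v)) := by
      rw [hf, show ofCoords p (e.symm v) = v from e.apply_symm_apply v]
    _ = μ • A v := by rw [h, map_smul]; rfl

end IsCoordMap

end CoordinateMapField

theorem projective_linear_of_nPlusTwo_generic_points_general {K L V W ι : Type*} [Field K]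
    [Field L] [AddCommGroup V] [Module K V] [AddCommGroup W] [Module L W] [Finite ι]
    (hι : 3 ≤ Cardinal.mk ι) (p : ι → ℙ K V) (hp : Projectivization.Independent p)
    (hspan : ⨆ i, (p i).submodule = ⊤) (r : ℙ K V) (hr : ∀ i, r ≠ p i) (F : ℙ K V → ℙ L W)
    (hF : Function.Injective F) (hFp : ∀ i, MapsLinesThrough F (p i))
    (hFr : MapsLinesThrough F r) :
    ∃ (σ : K ≃+* L) (A : V →ₛₗ[(σ : K →+* L)] W) (hA : Function.Injective A),
      F = Projectivization.map A hA := by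
  have := Fintype.ofFinite ι
  obtain ⟨f, hf⟩ := exists_isCoordMap hFp hF
  obtain ⟨ρ, hρ⟩ : r.rep ∈ LinearMap.range (ofCoords p) := by
    rw [range_ofCoords, hspan]
    exact Submodule.mem_top
  have : Nonempty ι := Cardinal.mk_ne_zero_iff.1 (zero_lt_three.trans_le hι).ne'
  obtain ⟨a, -, ha⟩ := exists_ne_zero_of_ofCoords_eq_rep hp hρ (hr (Classical.arbitrary ι))
  obtain ⟨b, hba, hb⟩ := exists_ne_zero_of_ofCoords_eq_rep hp hρ (hr a)
  have hratios := hf.preservesCoordRatios hFp hF hp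
  obtain ⟨σ, hσ⟩ := hratios.exists_ringEquiv hι (hf.exists_eq_smul hFp hF hp) hba.symm ha hb
    (hf.exists_add_eq hFp hF hp hFr hρ)
  exact ⟨σ, hf.exists_eq_map hp hspan (MapsLinesThrough.independent_comp hFp hF hp)
    (fun i => hratios.apply_ne_zero one_ne_zero) hσ⟩

section RealProjectiveSpace

variable {n : ℕ} {F : ℙ ℝ (Fin (n + 1) → ℝ) → ℙ ℝ (Fin (n + 1) → ℝ)}

theorem mapsLinesThrough_of_isProjLine_image {s : ℙ ℝ (Fin (n + 1) → ℝ)}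
    (h : ∀ l, IsProjLine l → s ∈ l → IsProjLine (F '' l)) : MapsLinesThrough F s := by
  have hcoe (U : Submodule ℝ (Fin (n + 1) → ℝ)) :
      (U.projectivization : Set (ℙ ℝ (Fin (n + 1) → ℝ))) = {x | x.submodule ≤ U} :=
    Set.ext (Submodule.mem_projectivization_iff_submodule_le U)
  intro U hU hs
  obtain ⟨U', hU', himage⟩ := h U.projectivization ⟨U, hU, hcoe U⟩ hs
  exact ⟨U', hU', himage.trans (hcoe U').symm⟩

/-- The field `ℝ` has no ring endomorphism except the identity. -/
theorem isProjLinear_of_eq_map {σ : ℝ →+* ℝ}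
    {A : (Fin (n + 1) → ℝ) →ₛₗ[σ] (Fin (n + 1) → ℝ)} (hA : Function.Injective A)
    (h : F = Projectivization.map A hA) : IsProjLinear F := by
  obtain rfl : σ = RingHom.id ℝ := Subsingleton.elim _ _
  exact ⟨.ofInjectiveEndo A hA, h⟩

end RealProjectiveSpace

/-- **Theorem (fundamental theorem of projective geometry, n+2 points, generic case).**
Let `n ≥ 2`, let `p̄₁,…,p̄_{n+1} ∈ ℝPⁿ` be in general position and let `p̄_{n+2} = r`
satisfy `r ∉ s̄p{p̄₁,…,p̄ₙ}` and `r ≠ p̄_{n+1}`. If `F : ℝPⁿ → ℝPⁿ` is injective and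
maps every projective line through one of `p̄₁,…,p̄_{n+2}` onto a projective line,
then `F` is projective-linear. -/
theorem projective_linear_of_nPlusTwo_generic_points
    {n : ℕ} (hn : 2 ≤ n)
    (p : Fin (n + 1) → ℙ ℝ (Fin (n + 1) → ℝ))
    (hp : LinearIndependent ℝ (fun i => (p i).rep))
    (r : ℙ ℝ (Fin (n + 1) → ℝ))
    (hr1 : ¬ r.submodule ≤ ⨆ i : Fin n, (p i.castSucc).submodule)
    (hr2 : r ≠ p (Fin.last n))
    (F : ℙ ℝ (Fin (n + 1) → ℝ) → ℙ ℝ (Fin (n + 1) → ℝ))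
    (hinj : Function.Injective F)
    (hline : ∀ l : Set (ℙ ℝ (Fin (n + 1) → ℝ)), IsProjLine l →
      ((∃ i, p i ∈ l) ∨ r ∈ l) → IsProjLine (F '' l)) :
    IsProjLinear F := by
  have hι : 3 ≤ Cardinal.mk (Fin (n + 1)) := by
    rw [Cardinal.mk_fin]
    exact_mod_cast Nat.succ_le_succ hn
  have hspan : ⨆ i, (p i).submodule = ⊤ := by
    simp only [Projectivization.submodule_eq, ← Submodule.span_range_eq_iSup]
    exact hp.span_eq_top_of_card_eq_finrank (by simp)
  have hr (i : Fin (n + 1)) : r ≠ p i := by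
    refine Fin.lastCases hr2 (fun j hrj => hr1 ?_) i
    exact hrj ▸ le_iSup (fun i : Fin n => (p i.castSucc).submodule) j
  obtain ⟨σ, A, hA, hFA⟩ := projective_linear_of_nPlusTwo_generic_points_general hι p
    (Projectivization.independent_iff.2 hp) hspan r hr F hinj
    (fun i => mapsLinesThrough_of_isProjLine_image fun l hl hi => hline l hl (.inl ⟨i, hi⟩))
    (mapsLinesThrough_of_isProjLine_image fun l hl hrl => hline l hl (.inr hrl))
  exact isProjLinear_of_eq_map hA hFA
end

section
/- Let F : ℝ² → ℝ² be an injection that maps each line in ℒ(e₁, e₂) onto a line. Then there exist linearly independent vectors u₁, u₂ ∈ ℝ² and bijections f, g : ℝ → ℝ with f(0) = g(0) = 0 and f(1) = g(1) = 1, such that for all s, t ∈ ℝ, F(se₁ + te₂) − F(0) = f(s)u₁ + g(t)u₂. -/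
/-!
The rows of the grid `(s, t) ↦ F (s e₁ + t e₂)` are pairwise disjoint lines of a plane, hence
parallel; so are the columns. Let `u₁` and `u₂` join `F 0` to `F e₁` and to `F e₂`. They are
independent, since otherwise the row and the column through `F 0`, which meet in that point only,
would be the same line. Finally `F (s e₁ + t e₂)` lies on the parallel to `u₁` through
`F (t e₂)` and on the parallel to `u₂` through `F (s e₁)`, so its coordinates relative to `u₁, u₂`
are those of `F (s e₁)` and `F (t e₂)`.
-/

open Function Module Set

section AffineLine

variable {K V : Type*} [DivisionRing K] [AddCommGroup V] [Module K V]

variable (K) in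
/-- The line `p + K v` in a vector space over an arbitrary division ring, as a set; it degenerates
to `{p}` when `v = 0`. Over `ℝ` it unfolds to `lineThru`. -/
def affineLine (p v : V) : Set V :=
  {x | ∃ r : K, x = p + r • v}

variable (K) in
/-- A set is a line if it is of the form `p + K v` with `v ≠ 0`. Over `ℝ` this unfolds to
`IsLine`. -/
def IsAffineLine (s : Set V) : Prop :=
  ∃ p v : V, v ≠ 0 ∧ s = affineLine K p v

lemma image_affineLine {W : Type*} (F : V → W) (p v : V) :
    F '' affineLine K p v = range fun r : K => F (p + r • v) := by
  ext y
  constructor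
  · rintro ⟨_, ⟨r, rfl⟩, rfl⟩
    exact ⟨r, rfl⟩
  · rintro ⟨r, rfl⟩
    exact ⟨_, ⟨r, rfl⟩, rfl⟩

lemma affineLine_smul {c : K} (hc : c ≠ 0) (p v : V) :
    affineLine K p (c • v) = affineLine K p v := by
  ext x
  constructor
  · rintro ⟨r, rfl⟩
    exact ⟨r * c, by rw [mul_smul]⟩
  · rintro ⟨r, rfl⟩
    exact ⟨r * c⁻¹, by rw [smul_smul, inv_mul_cancel_right₀ hc]⟩

lemma affineLine_eq_of_mem {p q v : V} (hq : q ∈ affineLine K p v) :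
    affineLine K p v = affineLine K q v := by
  obtain ⟨c, rfl⟩ := hq
  ext x
  constructor
  · rintro ⟨r, rfl⟩
    exact ⟨r - c, by rw [sub_smul, add_assoc, add_sub_cancel]⟩
  · rintro ⟨r, rfl⟩
    exact ⟨c + r, by rw [add_smul, add_assoc]⟩

lemma IsAffineLine.eq_affineLine_sub {s : Set V} (hs : IsAffineLine K s) {p q : V}
    (hp : p ∈ s) (hq : q ∈ s) (hpq : p ≠ q) : s = affineLine K p (q - p) := by
  obtain ⟨a, v, -, rfl⟩ := hs
  rw [affineLine_eq_of_mem hp] at hq ⊢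
  obtain ⟨c, rfl⟩ := hq
  have hc : c ≠ 0 := by
    rintro rfl
    simp at hpq
  rw [add_sub_cancel_left, affineLine_smul hc]

lemma affineLine_inter_nonempty (hV : finrank K V = 2) {v w : V}
    (hvw : LinearIndependent K ![v, w]) (p q : V) :
    (affineLine K p v ∩ affineLine K q w).Nonempty := by
  have hspan : Submodule.span K {v, w} = ⊤ := by
    rw [← Matrix.range_cons_cons_empty v w ![]]
    exact hvw.span_eq_top_of_card_eq_finrank (by simp [hV])
  obtain ⟨a, b, hab⟩ := Submodule.mem_span_pair.1 (hspan ▸ Submodule.mem_top : q - p ∈ _)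
  refine ⟨p + a • v, ⟨a, rfl⟩, -b, ?_⟩
  rw [neg_smul, ← sub_eq_add_neg, eq_sub_iff_add_eq, add_assoc, hab, add_sub_cancel]

lemma IsAffineLine.eq_affineLine_of_disjoint (hV : finrank K V = 2) {s : Set V}
    (hs : IsAffineLine K s) {p v : V} (hv : v ≠ 0) (hdisj : Disjoint s (affineLine K p v))
    {q : V} (hq : q ∈ s) : s = affineLine K q v := by
  obtain ⟨a, w, hw, rfl⟩ := hs
  have hdep : ¬ LinearIndependent K ![v, w] := fun hvw =>
    (affineLine_inter_nonempty hV hvw p a).ne_empty hdisj.symm.inter_eq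
  obtain ⟨c, rfl⟩ : ∃ c : K, c • v = w := by
    simpa [LinearIndependent.pair_iff' hv] using hdep
  have hc : c ≠ 0 := (smul_ne_zero_iff.1 hw).1
  rw [affineLine_eq_of_mem hq, affineLine_smul hc]

lemma IsAffineLine.exists_bijective_coordinate {ι : Type*} {φ : ι → V} (hφ : Injective φ)
    (hline : IsAffineLine K (range φ)) {i j : ι} (hij : i ≠ j) :
    ∃ f : ι → K, Bijective f ∧ f i = 0 ∧ f j = 1 ∧
      ∀ k, φ k = φ i + f k • (φ j - φ i) := by
  have hrange : range φ = affineLine K (φ i) (φ j - φ i) :=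
    hline.eq_affineLine_sub (mem_range_self i) (mem_range_self j) (hφ.ne hij)
  have hdir : φ j - φ i ≠ 0 := sub_ne_zero.2 (hφ.ne hij.symm)
  choose f hf using fun k => (hrange ▸ mem_range_self k : φ k ∈ affineLine K (φ i) (φ j - φ i))
  have coord_eq {k : ι} {r : K} (h : φ k = φ i + r • (φ j - φ i)) : f k = r :=
    smul_left_injective K hdir (add_left_cancel ((hf k).symm.trans h))
  refine ⟨f, ⟨fun k l hkl => hφ ?_, fun r => ?_⟩, coord_eq (by simp), coord_eq (by simp), hf⟩
  · rw [hf k, hf l, hkl]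
  · obtain ⟨k, hk⟩ : φ i + r • (φ j - φ i) ∈ range φ := hrange ▸ ⟨r, rfl⟩
    exact ⟨k, coord_eq hk⟩

end AffineLine

section Grid

variable {ι κ K V : Type*} [DivisionRing K] [AddCommGroup V] [Module K V] {P : ι → κ → V}
  {s₀ s₁ : ι} {t₀ t₁ : κ}

lemma range_row_eq_affineLine (hV : finrank K V = 2) (hP : Injective2 P)
    (hrow : ∀ t, IsAffineLine K (range fun s => P s t)) (hs : s₀ ≠ s₁) (t₀ t : κ) :
    (range fun s => P s t) = affineLine K (P s₀ t) (P s₁ t₀ - P s₀ t₀) := by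
  have hne : P s₀ t₀ ≠ P s₁ t₀ := (hP.left t₀).ne hs
  have hbase : (range fun s => P s t₀) = affineLine K (P s₀ t₀) (P s₁ t₀ - P s₀ t₀) :=
    (hrow t₀).eq_affineLine_sub ⟨s₀, rfl⟩ ⟨s₁, rfl⟩ hne
  obtain rfl | ht := eq_or_ne t t₀
  · exact hbase
  · have hdisj : Disjoint (range fun s => P s t) (range fun s => P s t₀) := by
      rw [disjoint_range_iff]
      exact fun s s' h => ht (hP h).2
    exact (hrow t).eq_affineLine_of_disjoint hV (sub_ne_zero.2 hne.symm) (hbase ▸ hdisj) ⟨s₀, rfl⟩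

lemma linearIndependent_grid_directions (hP : Injective2 P)
    (hrow : IsAffineLine K (range fun s => P s t₀)) (hs : s₀ ≠ s₁) (ht : t₀ ≠ t₁) :
    LinearIndependent K ![P s₁ t₀ - P s₀ t₀, P s₀ t₁ - P s₀ t₀] := by
  have hne : P s₀ t₀ ≠ P s₁ t₀ := (hP.left t₀).ne hs
  rw [LinearIndependent.pair_iff' (sub_ne_zero.2 hne.symm)]
  intro c hc
  obtain ⟨s, hst⟩ : P s₀ t₁ ∈ range fun s => P s t₀ := by
    rw [hrow.eq_affineLine_sub ⟨s₀, rfl⟩ ⟨s₁, rfl⟩ hne]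
    exact ⟨c, by rw [hc, add_sub_cancel]⟩
  exact ht (hP hst).2

theorem exists_diagonal_form_of_grid (hV : finrank K V = 2) (hP : Injective2 P)
    (hrow : ∀ t, IsAffineLine K (range fun s => P s t))
    (hcol : ∀ s, IsAffineLine K (range (P s))) (hs : s₀ ≠ s₁) (ht : t₀ ≠ t₁) :
    ∃ (u v : V) (f : ι → K) (g : κ → K),
      LinearIndependent K ![u, v] ∧ Bijective f ∧ Bijective g ∧
      f s₀ = 0 ∧ g t₀ = 0 ∧ f s₁ = 1 ∧ g t₁ = 1 ∧
      ∀ s t, P s t - P s₀ t₀ = f s • u + g t • v := by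
  obtain ⟨f, hf, hf₀, hf₁, hfP⟩ := (hrow t₀).exists_bijective_coordinate (hP.left t₀) hs
  obtain ⟨g, hg, hg₀, hg₁, hgP⟩ := (hcol s₀).exists_bijective_coordinate (hP.right s₀) ht
  have hindep := linearIndependent_grid_directions hP (hrow t₀) hs ht
  refine ⟨_, _, f, g, hindep, hf, hg, hf₀, hg₀, hf₁, hg₁, fun s t => ?_⟩
  set u := P s₁ t₀ - P s₀ t₀
  set v := P s₀ t₁ - P s₀ t₀
  obtain ⟨x, hx⟩ : P s t ∈ affineLine K (P s₀ t) u :=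
    range_row_eq_affineLine hV hP hrow hs t₀ t ▸ ⟨s, rfl⟩
  obtain ⟨y, hy⟩ : P s t ∈ affineLine K (P s t₀) v :=
    range_row_eq_affineLine hV (fun _ _ _ _ h => (hP h).symm) hcol ht s₀ s ▸ ⟨t, rfl⟩
  have hxy : x • u + g t • v = f s • u + y • v := by
    have hrowcol := hx.symm.trans hy
    rw [hgP t, hfP s, add_assoc, add_assoc] at hrowcol
    rw [add_comm, add_left_cancel hrowcol]
  rw [hx, hgP t, (hindep.eq_of_pair hxy).1]
  abel

end Grid

theorem plane_collineation_two_directions_diagonal_form_general {K L V W : Type*}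
    [DivisionRing K] [AddCommGroup V] [Module K V]
    [DivisionRing L] [AddCommGroup W] [Module L W] (hW : finrank L W = 2)
    {e₁ e₂ : V} (he : LinearIndependent K ![e₁, e₂]) {F : V → W} (hinj : Injective F)
    (honto₁ : ∀ a, IsAffineLine L (F '' affineLine K a e₁))
    (honto₂ : ∀ a, IsAffineLine L (F '' affineLine K a e₂)) :
    ∃ (u₁ u₂ : W) (f g : K → L),
      LinearIndependent L ![u₁, u₂] ∧
      Bijective f ∧ Bijective g ∧
      f 0 = 0 ∧ g 0 = 0 ∧ f 1 = 1 ∧ g 1 = 1 ∧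
      ∀ s t : K, F (s • e₁ + t • e₂) - F 0 = f s • u₁ + g t • u₂ := by
  have hgrid : Injective2 fun s t : K => F (s • e₁ + t • e₂) :=
    fun _ _ _ _ h => he.eq_of_pair (hinj h)
  have hrow (t : K) : IsAffineLine L (range fun s : K => F (s • e₁ + t • e₂)) := by
    simpa only [image_affineLine, add_comm] using honto₁ (t • e₂)
  have hcol (s : K) : IsAffineLine L (range fun t : K => F (s • e₁ + t • e₂)) := by
    simpa only [image_affineLine] using honto₂ (s • e₁)
  simpa only [zero_smul, add_zero] using
    exists_diagonal_form_of_grid hW hgrid hrow hcol zero_ne_one zero_ne_one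

/-- **Theorem (plane collineations in two directions have diagonal form).**
If `F : ℝ² → ℝ²` is an injection mapping each line in `ℒ(e₁, e₂)` onto a line, then
there are linearly independent `u₁, u₂ ∈ ℝ²` and bijections `f, g : ℝ → ℝ` with
`f 0 = g 0 = 0`, `f 1 = g 1 = 1`, such that
`F (s e₁ + t e₂) - F 0 = f s • u₁ + g t • u₂`. -/
theorem plane_collineation_two_directions_diagonal_form
    (F : (Fin 2 → ℝ) → (Fin 2 → ℝ))
    (hinj : Function.Injective F)
    (honto : ∀ (i : Fin 2) (a : Fin 2 → ℝ),
      IsLine (F '' lineThru a (Pi.single i 1 : Fin 2 → ℝ))) :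
    ∃ (u₁ u₂ : Fin 2 → ℝ) (f g : ℝ → ℝ),
      LinearIndependent ℝ ![u₁, u₂] ∧
      Function.Bijective f ∧ Function.Bijective g ∧
      f 0 = 0 ∧ g 0 = 0 ∧ f 1 = 1 ∧ g 1 = 1 ∧
      ∀ s t : ℝ,
        F (s • (Pi.single 0 1 : Fin 2 → ℝ) + t • (Pi.single 1 1 : Fin 2 → ℝ)) - F 0 = f s • u₁ + g t • u₂ := by
  have he : LinearIndependent ℝ ![(Pi.single 0 1 : Fin 2 → ℝ), Pi.single 1 1] := by
    simp [LinearIndependent.pair_iff, funext_iff, Fin.forall_fin_two]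
  exact plane_collineation_two_directions_diagonal_form_general (by simp) he hinj
    (honto 0) (honto 1)
end

section
/- Let n ≥ 2 and let F : ℝ² → ℝⁿ be an injective mapping that maps each line in ℒ(e₁, e₂) onto a line. Then there exist linearly independent vectors u₁, u₂ ∈ ℝⁿ, a vector u₃ ∈ ℝⁿ, and bijections f, g : ℝ → ℝ with f(0) = g(0) = 0 and f(1) = g(1) = 1, such that for all s, t ∈ ℝ, F(se₁ + te₂) − F(0) = f(s)u₁ + g(t)u₂ + f(s)g(t)u₃. -/
/-!
Coordinatize every row `{G x y | x}` and every column `{G x y | y}` affinely, so that the two base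
columns `x₀`, `x₁` (resp. the two base rows `y₀`, `y₁`) get the coordinates `0` and `1`. Let `u₁`
and `u₂` be the differences from `G x₀ y₀` to `G x₁ y₀` and `G x₀ y₁`, and `u₃` the mixed
difference of the four base points. Since the two base rows are disjoint, and so are the two base
columns, `u₁` and `u₂` are independent modulo `u₃`. Reach `G x y` once along its row and once along
its column and compare coefficients modulo `u₃`: the row coordinate of `G x y` is an affine
function of its column coordinate, with values `A y₀ x` and `A y₁ x` at `0` and `1`. If these two
values differed, some point of the column `x` would have row coordinate `0` and so lie on the
column `x₀`. Hence the row coordinate depends on `x` alone, the column coordinate on `y` alone, and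
expanding `G x y` along its row gives the formula.
-/

open AffineMap Function

section LineCoordinate

variable {K V X : Type*} [DivisionRing K] [AddCommGroup V] [Module K V]

/-- `f` is the affine coordinate on the line traced out by `φ`, normalized to be `0` at `x₀` and
`1` at `x₁`. -/
structure IsLineCoordinate (φ : X → V) (x₀ x₁ : X) (f : X → K) : Prop where
  bijective : Bijective f
  map_zero : f x₀ = 0
  map_one : f x₁ = 1
  eq_lineMap (x : X) : φ x = lineMap (φ x₀) (φ x₁) (f x)

theorem exists_isLineCoordinate {φ : X → V} (hφ : Injective φ)
    (hline : ∃ p q : V, Set.range φ = line[K, p, q]) {x₀ x₁ : X} (hx : x₀ ≠ x₁) :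
    ∃ f : X → K, IsLineCoordinate φ x₀ x₁ f := by
  obtain ⟨p, q, hpq⟩ := hline
  have mem_line (x : X) : φ x ∈ line[K, p, q] := by
    rw [← SetLike.mem_coe, ← hpq]
    exact Set.mem_range_self x
  have line_eq : line[K, φ x₀, φ x₁] = line[K, p, q] :=
    affineSpan_pair_eq_of_mem_of_mem_of_ne (mem_line x₀) (mem_line x₁) (hφ.ne hx)
  have lineMap_inj : Injective (lineMap (φ x₀) (φ x₁) : K → V) := lineMap_injective K (hφ.ne hx)
  have exists_coord (x : X) : ∃ c : K, lineMap (φ x₀) (φ x₁) c = φ x :=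
    mem_affineSpan_pair_iff_exists_lineMap_eq.1 (line_eq ▸ mem_line x)
  choose f hf using exists_coord
  refine ⟨f, ⟨fun x x' h => hφ ?_, fun c => ?_⟩, ?_, ?_, fun x => (hf x).symm⟩
  · rw [← hf x, h, hf x']
  · obtain ⟨x, hx⟩ : lineMap (φ x₀) (φ x₁) c ∈ Set.range φ := by
      rw [hpq, ← line_eq]
      exact lineMap_mem_affineSpan_pair c _ _
    exact ⟨x, lineMap_inj ((hf x).trans hx)⟩
  · exact lineMap_inj (by rw [hf, lineMap_apply_zero])
  · exact lineMap_inj (by rw [hf, lineMap_apply_one])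

end LineCoordinate

section MixedDifference

variable {K V : Type*} [AddCommGroup V]

/-- The mixed second difference of a `2 × 2` array of vectors, measuring its failure to be a
parallelogram. -/
def mixedDifference (p₀₀ p₁₀ p₀₁ p₁₁ : V) : V :=
  p₁₁ - p₁₀ - p₀₁ + p₀₀

theorem mixedDifference_comm (p₀₀ p₁₀ p₀₁ p₁₁ : V) :
    mixedDifference p₀₀ p₁₀ p₀₁ p₁₁ = mixedDifference p₀₀ p₀₁ p₁₀ p₁₁ := by
  unfold mixedDifference
  abel

theorem lineMap_lineMap_sub_left [Ring K] [Module K V] (p₀₀ p₁₀ p₀₁ p₁₁ : V) (a₀ a₁ b : K) :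
    lineMap (lineMap p₀₀ p₁₀ a₀) (lineMap p₀₁ p₁₁ a₁) b - p₀₀ =
      lineMap a₀ a₁ b • (p₁₀ - p₀₀) + b • (p₀₁ - p₀₀) +
        (b * a₁) • mixedDifference p₀₀ p₁₀ p₀₁ p₁₁ := by
  simp only [lineMap_apply_module', mixedDifference, smul_eq_mul, smul_sub, smul_add, mul_sub,
    sub_smul, add_smul, mul_smul]
  abel

theorem lineMap_sub_lineMap_eq_inv_smul [DivisionRing K] [Module K V] (p₀₀ p₁₀ p₀₁ p₁₁ : V)
    {p q r : K} (hq : q ≠ 0) :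
    lineMap p₀₁ p₁₁ (q⁻¹ * r) - lineMap p₀₀ p₁₀ (q⁻¹ * (r - p)) =
      q⁻¹ • (p • (p₁₀ - p₀₀) + q • (p₀₁ - p₀₀) + r • mixedDifference p₀₀ p₁₀ p₀₁ p₁₁) := by
  simp only [lineMap_apply_module', mixedDifference, smul_sub, smul_add, mul_sub, sub_smul,
    mul_smul, inv_smul_smul₀ hq]
  abel

end MixedDifference

section LineGrid

variable {K V X Y : Type*} [DivisionRing K] [AddCommGroup V] [Module K V]

/-- An injective family `G` whose rows `G · y` and columns `G x ·` all trace out lines, with the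
coordinates `A y` and `B x` on them normalized by the columns `x₀`, `x₁` and the rows `y₀`, `y₁`
respectively. -/
structure IsLineGrid (G : X → Y → V) (x₀ x₁ : X) (y₀ y₁ : Y) (A : Y → X → K) (B : X → Y → K) :
    Prop where
  injective2 : Injective2 G
  row (y : Y) : IsLineCoordinate (fun x => G x y) x₀ x₁ (A y)
  col (x : X) : IsLineCoordinate (G x) y₀ y₁ (B x)

theorem exists_isLineGrid {G : X → Y → V} (hG : Injective2 G)
    (hrow : ∀ y, ∃ p q : V, Set.range (fun x => G x y) = line[K, p, q])
    (hcol : ∀ x, ∃ p q : V, Set.range (G x) = line[K, p, q])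
    {x₀ x₁ : X} (hx : x₀ ≠ x₁) {y₀ y₁ : Y} (hy : y₀ ≠ y₁) :
    ∃ (A : Y → X → K) (B : X → Y → K), IsLineGrid G x₀ x₁ y₀ y₁ A B := by
  choose A hA using fun y => exists_isLineCoordinate (hG.left y) (hrow y) hx
  choose B hB using fun x => exists_isLineCoordinate (hG.right x) (hcol x) hy
  exact ⟨A, B, hG, hA, hB⟩

namespace IsLineGrid

variable {G : X → Y → V} {x₀ x₁ : X} {y₀ y₁ : Y} {A : Y → X → K} {B : X → Y → K}

theorem flip (h : IsLineGrid G x₀ x₁ y₀ y₁ A B) :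
    IsLineGrid (fun y x => G x y) y₀ y₁ x₀ x₁ B A :=
  ⟨fun _ _ _ _ e => (h.injective2 e).symm, h.col, h.row⟩

theorem row_ne (h : IsLineGrid G x₀ x₁ y₀ y₁ A B) : y₀ ≠ y₁ := by
  rintro rfl
  exact zero_ne_one ((h.col x₀).map_zero.symm.trans (h.col x₀).map_one)

theorem sub_eq_of_col (h : IsLineGrid G x₀ x₁ y₀ y₁ A B) (x : X) (y : Y) :
    G x y - G x₀ y₀ =
      lineMap (A y₀ x) (A y₁ x) (B x y) • (G x₁ y₀ - G x₀ y₀) +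
        B x y • (G x₀ y₁ - G x₀ y₀) +
        (B x y * A y₁ x) • mixedDifference (G x₀ y₀) (G x₁ y₀) (G x₀ y₁) (G x₁ y₁) := by
  rw [(h.col x).eq_lineMap y, (h.row y₀).eq_lineMap x, (h.row y₁).eq_lineMap x,
    lineMap_lineMap_sub_left]

theorem sub_eq_of_row (h : IsLineGrid G x₀ x₁ y₀ y₁ A B) (x : X) (y : Y) :
    G x y - G x₀ y₀ =
      A y x • (G x₁ y₀ - G x₀ y₀) +
        lineMap (B x₀ y) (B x₁ y) (A y x) • (G x₀ y₁ - G x₀ y₀) +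
        (A y x * B x₁ y) • mixedDifference (G x₀ y₀) (G x₁ y₀) (G x₀ y₁) (G x₁ y₁) := by
  rw [h.flip.sub_eq_of_col y x, mixedDifference_comm, add_comm (A y x • _)]

theorem snd_coeff_eq_zero (h : IsLineGrid G x₀ x₁ y₀ y₁ A B) {p q r : K}
    (hpqr : p • (G x₁ y₀ - G x₀ y₀) + q • (G x₀ y₁ - G x₀ y₀) +
      r • mixedDifference (G x₀ y₀) (G x₁ y₀) (G x₀ y₁) (G x₁ y₁) = 0) :
    q = 0 := by
  by_contra hq
  obtain ⟨x, hx⟩ := (h.row y₁).bijective.surjective (q⁻¹ * r)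
  obtain ⟨x', hx'⟩ := (h.row y₀).bijective.surjective (q⁻¹ * (r - p))
  have rows_meet : G x y₁ = G x' y₀ := by
    rw [← sub_eq_zero, (h.row y₁).eq_lineMap x, (h.row y₀).eq_lineMap x', hx, hx',
      lineMap_sub_lineMap_eq_inv_smul _ _ _ _ hq, hpqr, smul_zero]
  exact h.row_ne (h.injective2 rows_meet).2.symm

theorem fst_coeff_eq_zero (h : IsLineGrid G x₀ x₁ y₀ y₁ A B) {p q r : K}
    (hpqr : p • (G x₁ y₀ - G x₀ y₀) + q • (G x₀ y₁ - G x₀ y₀) +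
      r • mixedDifference (G x₀ y₀) (G x₁ y₀) (G x₀ y₁) (G x₁ y₁) = 0) :
    p = 0 := by
  rw [mixedDifference_comm, add_comm (p • _)] at hpqr
  exact h.flip.snd_coeff_eq_zero hpqr

theorem linearIndependent_pair (h : IsLineGrid G x₀ x₁ y₀ y₁ A B) :
    LinearIndependent K ![G x₁ y₀ - G x₀ y₀, G x₀ y₁ - G x₀ y₀] := by
  refine LinearIndependent.pair_iff.2 fun p q hpq => ?_
  have hpq0 : p • (G x₁ y₀ - G x₀ y₀) + q • (G x₀ y₁ - G x₀ y₀) +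
      (0 : K) • mixedDifference (G x₀ y₀) (G x₁ y₀) (G x₀ y₁) (G x₁ y₁) = 0 := by
    rw [hpq, zero_smul, add_zero]
  exact ⟨h.fst_coeff_eq_zero hpq0, h.snd_coeff_eq_zero hpq0⟩

theorem rowCoord_eq_lineMap (h : IsLineGrid G x₀ x₁ y₀ y₁ A B) (x : X) (y : Y) :
    A y x = lineMap (A y₀ x) (A y₁ x) (B x y) := by
  have row_eq_col := (h.sub_eq_of_row x y).symm.trans (h.sub_eq_of_col x y)
  rw [← sub_eq_zero, add_sub_add_comm, add_sub_add_comm, ← sub_smul, ← sub_smul, ← sub_smul]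
    at row_eq_col
  exact sub_eq_zero.1 (h.fst_coeff_eq_zero row_eq_col)

theorem rowCoord_base_eq (h : IsLineGrid G x₀ x₁ y₀ y₁ A B) (x : X) : A y₀ x = A y₁ x := by
  by_contra hne
  have hne' : A y₁ x - A y₀ x ≠ 0 := sub_ne_zero.2 (Ne.symm hne)
  obtain ⟨y, hy⟩ := (h.col x).bijective.surjective (-A y₀ x * (A y₁ x - A y₀ x)⁻¹)
  have coord_eq_zero : A y x = 0 := by
    rw [h.rowCoord_eq_lineMap, hy, lineMap_apply_module', smul_eq_mul,
      inv_mul_cancel_right₀ hne', neg_add_cancel]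
  obtain rfl : x = x₀ := (h.row y).bijective.injective (coord_eq_zero.trans (h.row y).map_zero.symm)
  exact hne ((h.row y₀).map_zero.trans (h.row y₁).map_zero.symm)

theorem rowCoord_eq (h : IsLineGrid G x₀ x₁ y₀ y₁ A B) (x : X) (y : Y) : A y x = A y₀ x := by
  rw [h.rowCoord_eq_lineMap, ← h.rowCoord_base_eq, lineMap_same_apply]

theorem sub_eq (h : IsLineGrid G x₀ x₁ y₀ y₁ A B) (x : X) (y : Y) :
    G x y - G x₀ y₀ =
      A y₀ x • (G x₁ y₀ - G x₀ y₀) + B x₀ y • (G x₀ y₁ - G x₀ y₀) +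
        (A y₀ x * B x₀ y) • mixedDifference (G x₀ y₀) (G x₁ y₀) (G x₀ y₁) (G x₁ y₁) := by
  rw [h.sub_eq_of_row, h.flip.rowCoord_eq y x₁, lineMap_same_apply, h.rowCoord_eq x y]

end IsLineGrid

theorem plane_to_Rn_collineation_two_directions_general {G : X → Y → V} (hG : Injective2 G)
    (hrow : ∀ y, ∃ p q : V, Set.range (fun x => G x y) = line[K, p, q])
    (hcol : ∀ x, ∃ p q : V, Set.range (G x) = line[K, p, q])
    {x₀ x₁ : X} (hx : x₀ ≠ x₁) {y₀ y₁ : Y} (hy : y₀ ≠ y₁) :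
    ∃ (u₁ u₂ u₃ : V) (f : X → K) (g : Y → K),
      LinearIndependent K ![u₁, u₂] ∧
      Bijective f ∧ Bijective g ∧
      f x₀ = 0 ∧ g y₀ = 0 ∧ f x₁ = 1 ∧ g y₁ = 1 ∧
      ∀ x y, G x y - G x₀ y₀ = f x • u₁ + g y • u₂ + (f x * g y) • u₃ := by
  obtain ⟨A, B, h⟩ := exists_isLineGrid hG hrow hcol hx hy
  exact ⟨_, _, _, A y₀, B x₀, h.linearIndependent_pair, (h.row y₀).bijective, (h.col x₀).bijective,
    (h.row y₀).map_zero, (h.col x₀).map_zero, (h.row y₀).map_one, (h.col x₀).map_one, h.sub_eq⟩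

end LineGrid

section Plane

theorem lineThru_eq_affineSpan_pair {k : ℕ} (a b : Fin k → ℝ) :
    lineThru a b = line[ℝ, a, a + b] := by
  ext x
  rw [SetLike.mem_coe, mem_affineSpan_pair_iff_exists_lineMap_eq]
  simp only [lineThru, Set.mem_ofPred_eq, lineMap_apply_module', add_sub_cancel_left,
    add_comm _ a, eq_comm]

theorem image_lineThru {k : ℕ} {W : Type*} (F : (Fin k → ℝ) → W) (a b : Fin k → ℝ) :
    F '' lineThru a b = Set.range fun t : ℝ => F (a + t • b) := by
  ext w
  simp [lineThru]

theorem IsLine.exists_range_eq_affineSpan_pair {k m : ℕ} {F : (Fin k → ℝ) → (Fin m → ℝ)}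
    {a b : Fin k → ℝ} (h : IsLine (F '' lineThru a b)) :
    ∃ p q : Fin m → ℝ, Set.range (fun t : ℝ => F (a + t • b)) = line[ℝ, p, q] := by
  obtain ⟨p, v, -, hpv⟩ := h
  exact ⟨p, p + v, by rw [← image_lineThru, hpv, lineThru_eq_affineSpan_pair]⟩

theorem injective2_smul_single_add_smul_single :
    Injective2 fun s t : ℝ =>
      s • (Pi.single 0 1 : Fin 2 → ℝ) + t • (Pi.single 1 1 : Fin 2 → ℝ) :=
  fun _ _ _ _ h => ⟨by simpa using congrFun h 0, by simpa using congrFun h 1⟩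

end Plane

/-- **Theorem (collineations of the plane into `ℝⁿ` in two directions).**
If `n ≥ 2` and `F : ℝ² → ℝⁿ` is an injection mapping each line in `ℒ(e₁, e₂)` onto a
line, then there are linearly independent `u₁, u₂ ∈ ℝⁿ`, a vector `u₃ ∈ ℝⁿ`, and
bijections `f, g : ℝ → ℝ` with `f 0 = g 0 = 0`, `f 1 = g 1 = 1`, such that
`F (s e₁ + t e₂) - F 0 = f s • u₁ + g t • u₂ + (f s * g t) • u₃`. -/
theorem plane_to_Rn_collineation_two_directions
    {n : ℕ} (hn : 2 ≤ n)
    (F : (Fin 2 → ℝ) → (Fin n → ℝ))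
    (hinj : Function.Injective F)
    (honto : ∀ (i : Fin 2) (a : Fin 2 → ℝ),
      IsLine (F '' lineThru a (Pi.single i 1 : Fin 2 → ℝ))) :
    ∃ (u₁ u₂ u₃ : Fin n → ℝ) (f g : ℝ → ℝ),
      LinearIndependent ℝ ![u₁, u₂] ∧
      Function.Bijective f ∧ Function.Bijective g ∧
      f 0 = 0 ∧ g 0 = 0 ∧ f 1 = 1 ∧ g 1 = 1 ∧
      ∀ s t : ℝ,
        F (s • (Pi.single 0 1 : Fin 2 → ℝ) + t • (Pi.single 1 1 : Fin 2 → ℝ)) - F 0 =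
          f s • u₁ + g t • u₂ + (f s * g t) • u₃ := by
  simpa only [zero_smul, add_zero] using
    plane_to_Rn_collineation_two_directions_general
      (G := fun s t => F (s • Pi.single 0 1 + t • Pi.single 1 1))
      (fun _ _ _ _ h => injective2_smul_single_add_smul_single (hinj h))
      (fun t => by simpa only [add_comm] using
        (honto 0 (t • Pi.single 1 1)).exists_range_eq_affineSpan_pair)
      (fun s => (honto 1 (s • Pi.single 0 1)).exists_range_eq_affineSpan_pair)
      zero_ne_one zero_ne_one
end

section
/- Let f : ℝ → ℝ be a bijective function with f(0) = 0 and f(1) = 1. Assume there is a function G : ℝ → ℝ such that (f(a + b) − f(b))/f(a) = G(b) for every a ≠ 0 and every b ∈ ℝ. Then f is additive, i.e., f(a + b) = f(a) + f(b) for all a, b ∈ ℝ. -/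
/-!
Clearing denominators gives `f (a + b) = f b + G b * f a`, and exchanging `a` and `b` shows that
`G = 1 + c * f` for a constant `c`. If `c ≠ 0`, then `f` takes the value `-c⁻¹` at some `b`, so
`G b = 0` and every translate `f (a + b)` equals `f b`: `f` would be constant. Hence `G = 1`.
-/

section

open Function

variable {A K : Type*} {f G : A → K}

theorem map_add_eq_add_mul_of_div_eq [AddZeroClass A] [DivisionRing K]
    (h0 : f 0 = 0) (hne : ∀ a, a ≠ 0 → f a ≠ 0)
    (hG : ∀ a b, a ≠ 0 → (f (a + b) - f b) / f a = G b) (a b : A) :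
    f (a + b) = f b + G b * f a := by
  rcases eq_or_ne a 0 with rfl | ha
  · rw [zero_add, h0, mul_zero, add_zero]
  · exact sub_eq_iff_eq_add'.mp ((div_eq_iff (hne a ha)).mp (hG a b ha))

theorem multiplier_eq_one_add_mul [AddCommMagma A] [Ring K]
    (h : ∀ a b, f (a + b) = f b + G b * f a) {u : A} (hu : f u = 1) (b : A) :
    G b = 1 + (G u - 1) * f b := by
  have exchange : f b + G b = 1 + G u * f b :=
    calc f b + G b = f (u + b) := by rw [h, hu, mul_one]
      _ = f (b + u) := by rw [add_comm]
      _ = 1 + G u * f b := by rw [h, hu]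
  rw [eq_sub_of_add_eq' exchange, sub_one_mul, add_sub_assoc]

theorem multiplier_ne_zero [AddGroup A] [NonUnitalNonAssocSemiring K] [Nontrivial K]
    (hf : Surjective f) (h : ∀ a b, f (a + b) = f b + G b * f a) (b : A) : G b ≠ 0 := by
  intro hb
  have f_const (x : A) : f x = f b :=
    calc f x = f (x - b + b) := by rw [sub_add_cancel]
      _ = f b := by rw [h, hb, zero_mul, add_zero]
  obtain ⟨y, hy⟩ := exists_ne (f b)
  obtain ⟨x, rfl⟩ := hf y
  exact hy (f_const x)

theorem multiplier_eq_one [AddCommGroup A] [DivisionRing K]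
    (hf : Surjective f) (h : ∀ a b, f (a + b) = f b + G b * f a) (b : A) : G b = 1 := by
  obtain ⟨u, hu⟩ := hf 1
  have G_affine := multiplier_eq_one_add_mul h hu
  have coeff_eq_zero : G u - 1 = 0 := by
    by_contra hc
    obtain ⟨z, hz⟩ := hf (-(G u - 1)⁻¹)
    have G_z : G z = 0 := by rw [G_affine, hz, mul_neg, mul_inv_cancel₀ hc, add_neg_cancel]
    exact multiplier_ne_zero hf h z G_z
  rw [G_affine, coeff_eq_zero, zero_mul, add_zero]

theorem additive_of_constant_difference_quotient_general [AddCommGroup A] [DivisionRing K]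
    (hf : Surjective f) (hne : ∀ a, a ≠ 0 → f a ≠ 0)
    (hG : ∀ a b, a ≠ 0 → (f (a + b) - f b) / f a = G b) (a b : A) :
    f (a + b) = f a + f b := by
  have h0 : f 0 = 0 := by
    obtain ⟨z, hz⟩ := hf 0
    rwa [not_imp_not.mp (hne z) hz] at hz
  have h := map_add_eq_add_mul_of_div_eq h0 hne hG
  rw [h, multiplier_eq_one hf h, one_mul, add_comm]

end

/-- **Lemma (a bijection with constant difference quotients is additive).**
Let `f : ℝ → ℝ` be a bijection with `f 0 = 0` and `f 1 = 1`. If there is a function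
`G : ℝ → ℝ` with `(f (a + b) - f b) / f a = G b` for every `a ≠ 0` and every `b`,
then `f` is additive. -/
theorem additive_of_constant_difference_quotient
    (f : ℝ → ℝ) (hf : Function.Bijective f) (h0 : f 0 = 0) (h1 : f 1 = 1)
    (G : ℝ → ℝ) (hG : ∀ a b : ℝ, a ≠ 0 → (f (a + b) - f b) / f a = G b) :
    ∀ a b : ℝ, f (a + b) = f a + f b := by
  have hne (a : ℝ) (ha : a ≠ 0) : f a ≠ 0 := h0 ▸ hf.injective.ne ha
  exact additive_of_constant_difference_quotient_general hf.surjective hne hG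
end

section
/- Let n ≥ 2, let v₁, v₂, v₃ ∈ ℝ² be 2-independent (every two of them linearly independent), and let F : ℝ² → ℝⁿ be injective. Assume that F maps each line in ℒ(v₁, v₂, v₃) onto a line. Then F is affine-additive. -/
/-!
Let `v`, `w`, `u` be the three directions. The image of the plane stays in one plane: given
the images of two lines `x + ℝ v` and `x + ℝ w`, a line in direction `u` that meets them in two
different points is mapped into the plane they span. Two parallel lines are therefore mapped onto
disjoint lines of one plane, that is, onto parallel lines, so that parallelograms with sides in two
of the directions are mapped onto parallelograms: `F (x + z + y) - F (x + z) = F (x + y) - F x`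
for `y ∈ ℝ v` and `z ∈ ℝ w`, and likewise for `z ∈ ℝ u`. As `w` and `u` span the plane,
`F (x + y) - F x` does not depend on `x` at all, which is additivity of `F - F 0`.
-/

open Submodule

section ThreeDirections

variable {K K' V W : Type*} [DivisionRing K'] [AddCommGroup V] [AddCommGroup W] [Module K' W]

variable (K') in
/-- `F` maps every translate of the subspace `L` onto a line over `K'`. For `L = K ∙ v` this says
that `F` maps every line parallel to `v` onto a line. The scalars `K` of the domain need not be
related to those of the codomain. -/
def MapsTranslatesOntoLines [Ring K] [Module K V] (F : V → W) (L : Submodule K V) : Prop :=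
  ∀ a : V, ∃ p d : W, d ≠ 0 ∧ F '' (AffineSubspace.mk' a L) = AffineSubspace.mk' p (K' ∙ d)

variable {F : V → W}

namespace MapsTranslatesOntoLines

section Ring

variable [Ring K] [Module K V] {L M : Submodule K V}

theorem mem_span_sub_iff (hL : MapsTranslatesOntoLines K' F L) (hF : F.Injective) (x : V) {y : V}
    (hy : y ∈ L) (hy₀ : y ≠ 0) {w : W} :
    w ∈ K' ∙ (F (x + y) - F x) ↔ ∃ l ∈ L, F (x + l) - F x = w := by
  obtain ⟨p, d, hd, himage⟩ := hL x
  have hmem (q : W) : q - p ∈ K' ∙ d ↔ ∃ l ∈ L, F (x + l) = q := by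
    rw [← vsub_eq_sub, ← AffineSubspace.mem_mk', ← SetLike.mem_coe, ← himage]
    exact ⟨fun ⟨b, hb, hFb⟩ ↦ ⟨b - x, hb, by rwa [add_sub_cancel]⟩,
      fun ⟨l, hl, hFl⟩ ↦ ⟨x + l, by simpa using hl, hFl⟩⟩
  have hx : F x - p ∈ K' ∙ d := (hmem _).2 ⟨0, zero_mem L, by rw [add_zero]⟩
  have hspan : K' ∙ (F (x + y) - F x) = K' ∙ d := by
    refine ((nonzero_span_atom d hd).le_iff_eq ?_).1 ?_
    · simpa [span_singleton_eq_bot, sub_eq_zero] using hF.ne (by simpa using hy₀)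
    · simpa using sub_mem ((hmem _).2 ⟨y, hy, rfl⟩) hx
  rw [hspan, ← add_mem_cancel_right hx, ← add_sub_assoc, hmem]
  simp only [sub_eq_iff_eq_add]

theorem sub_mem_span (hL : MapsTranslatesOntoLines K' F L) (hF : F.Injective) (x : V) {y l : V}
    (hy : y ∈ L) (hy₀ : y ≠ 0) (hl : l ∈ L) : F (x + l) - F x ∈ K' ∙ (F (x + y) - F x) :=
  (hL.mem_span_sub_iff hF x hy hy₀).2 ⟨l, hl, rfl⟩

theorem disjoint_span_sub (hL : MapsTranslatesOntoLines K' F L)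
    (hM : MapsTranslatesOntoLines K' F M) (hF : F.Injective) (hLM : Disjoint L M) (x : V)
    {y z : V} (hy : y ∈ L) (hy₀ : y ≠ 0) (hz : z ∈ M) (hz₀ : z ≠ 0) :
    Disjoint (K' ∙ (F (x + y) - F x)) (K' ∙ (F (x + z) - F x)) := by
  refine disjoint_def.2 fun w hwL hwM ↦ ?_
  obtain ⟨l, hl, rfl⟩ := (hL.mem_span_sub_iff hF x hy hy₀).1 hwL
  obtain ⟨m, hm, hml⟩ := (hM.mem_span_sub_iff hF x hz hz₀).1 hwM
  obtain rfl : m = l := add_left_cancel (hF (sub_left_injective hml))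
  rw [disjoint_def.1 hLM m hl hm, add_zero, sub_self]

/-- Two lines of one plane with different directions meet, whereas `x + L` and `x + z + L` have
disjoint images. -/
theorem sub_mem_span_of_mem_sup (hL : MapsTranslatesOntoLines K' F L) (hF : F.Injective) (x : V)
    {y z l : V} (hy : y ∈ L) (hy₀ : y ≠ 0) (hz : z ∉ L) (hl : l ∈ L)
    (hmem : F (x + z + l) - F (x + z) ∈ K' ∙ (F (x + y) - F x) ⊔ K' ∙ (F (x + z) - F x)) :
    F (x + z + l) - F (x + z) ∈ K' ∙ (F (x + y) - F x) := by
  by_contra hnot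
  obtain rfl | hl₀ := eq_or_ne l 0
  · simp at hnot
  have hexchange : F (x + z) - F x ∈
      K' ∙ (F (x + y) - F x) ⊔ K' ∙ (F (x + z + l) - F (x + z)) := by
    rw [sup_comm, ← span_insert] at hmem ⊢
    exact mem_span_insert_exchange hmem hnot
  obtain ⟨d, hd, e, he, hde⟩ := mem_sup.1 hexchange
  obtain ⟨s, hs, hds⟩ := (hL.mem_span_sub_iff hF x hy hy₀).1 hd
  obtain ⟨t, ht, het⟩ := (hL.mem_span_sub_iff hF (x + z) hl hl₀).1 (neg_mem he)
  have hmeet : F (x + s) = F (x + z + t) := by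
    rw [sub_eq_iff_eq_add.1 hds, sub_eq_iff_eq_add.1 het, eq_neg_add_iff_add_eq, ← add_assoc,
      add_comm e, hde, sub_add_cancel]
  have hst : s = z + t := add_left_cancel ((hF hmeet).trans (add_assoc x z t))
  exact hz (eq_sub_of_add_eq hst.symm ▸ sub_mem hs ht)

end Ring

section DivisionRing

variable [DivisionRing K] [Module K V] {L M N : Submodule K V}

/-- The translate of `N` through `x + z + c • y` meets `x + L` in `x + (c - 1) • y` and `x + M` in
`x + (1 - c) • z`, which differ because `c ≠ 1`. -/
theorem sub_mem_sup_span (hL : MapsTranslatesOntoLines K' F L)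
    (hM : MapsTranslatesOntoLines K' F M) (hN : MapsTranslatesOntoLines K' F N)
    (hF : F.Injective) (x : V) {y z : V} (hy : y ∈ L) (hy₀ : y ≠ 0) (hz : z ∈ M) (hz₀ : z ≠ 0)
    (hyz : y + z ∈ N) (hyz₀ : y + z ≠ 0) {c : K} (hc : c ≠ 1) :
    F (x + z + c • y) - F (x + z) ∈ K' ∙ (F (x + y) - F x) ⊔ K' ∙ (F (x + z) - F x) := by
  set q := x + (c - 1) • y with hq
  set r := x + (1 - c) • z with hr
  have hqx : F q - F x ∈ K' ∙ (F (x + y) - F x) := hL.sub_mem_span hF x hy hy₀ (L.smul_mem _ hy)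
  have hrx : F r - F x ∈ K' ∙ (F (x + z) - F x) := hM.sub_mem_span hF x hz hz₀ (M.smul_mem _ hz)
  have hpq : F (x + z + c • y) - F q ∈ K' ∙ (F r - F q) := by
    have hp_eq : x + z + c • y = q + (y + z) := by rw [hq, sub_smul, one_smul]; abel
    have hr_eq : r = q + (1 - c) • (y + z) := by
      rw [hr, hq, smul_add, ← neg_sub c 1, neg_smul, neg_smul]; abel
    rw [hp_eq, hr_eq]
    exact hN.sub_mem_span hF q (N.smul_mem _ hyz) (smul_ne_zero (sub_ne_zero.2 hc.symm) hyz₀) hyz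
  have hrq : F r - F q ∈ K' ∙ (F (x + y) - F x) ⊔ K' ∙ (F (x + z) - F x) := by
    simpa only [sub_sub_sub_cancel_right] using sub_mem (mem_sup_right hrx) (mem_sup_left hqx)
  have hpx : F (x + z + c • y) - F x ∈ K' ∙ (F (x + y) - F x) ⊔ K' ∙ (F (x + z) - F x) := by
    simpa only [sub_add_sub_cancel] using
      add_mem ((span_singleton_le_iff_mem _ _).2 hrq hpq) (mem_sup_left hqx)
  simpa only [sub_sub_sub_cancel_right] using
    sub_mem hpx (mem_sup_right (mem_span_singleton_self (F (x + z) - F x)))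

theorem sub_mem_span_of_parallel (hL : MapsTranslatesOntoLines K' F L)
    (hM : MapsTranslatesOntoLines K' F M) (hN : MapsTranslatesOntoLines K' F N)
    (hF : F.Injective) (hLM : Disjoint L M) (hMN : Disjoint M N) (hLN : Codisjoint L N)
    (hK : ∃ c : K, c ≠ 0 ∧ c ≠ 1) (x : V) {y l z : V} (hy : y ∈ L) (hy₀ : y ≠ 0) (hl : l ∈ L)
    (hz : z ∈ M) : F (x + z + l) - F (x + z) ∈ K' ∙ (F (x + y) - F x) := by
  obtain ⟨c, hc₀, hc₁⟩ := hK
  obtain rfl | hz₀ := eq_or_ne z 0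
  · simpa only [add_zero] using hL.sub_mem_span hF x hy hy₀ hl
  have hzL : z ∉ L := fun h ↦ hz₀ (disjoint_def.1 hLM z h hz)
  have hzN : z ∉ N := fun h ↦ hz₀ (disjoint_def.1 hMN z hz h)
  obtain ⟨k, n, hk, hn, hkn⟩ := codisjoint_iff_exists_add_eq.1 hLN z
  obtain rfl : n = -k + z := (neg_add_eq_of_eq_add hkn.symm).symm
  have hk' : -k ∈ L := neg_mem hk
  have hk₀ : -k ≠ 0 := fun h ↦ hzN (by simpa [h] using hn)
  have hkz₀ : -k + z ≠ 0 := fun h ↦ hzL (neg_add_eq_zero.1 h ▸ hk)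
  have hck : F (x + z + c • -k) - F (x + z) ∈ K' ∙ (F (x + -k) - F x) :=
    hL.sub_mem_span_of_mem_sup hF x hk' hk₀ hzL (L.smul_mem c hk')
      (hL.sub_mem_sup_span hM hN hF x hk' hk₀ hz hz₀ hn hkz₀ hc₁)
  exact mem_span_singleton_trans
    (hL.sub_mem_span hF (x + z) (L.smul_mem c hk') (smul_ne_zero hc₀ hk₀) hl)
    (mem_span_singleton_trans hck (hL.sub_mem_span hF x hy hy₀ hk'))

theorem parallelogram (hL : MapsTranslatesOntoLines K' F L)
    (hM : MapsTranslatesOntoLines K' F M) (hN : MapsTranslatesOntoLines K' F N)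
    (hF : F.Injective) (hLM : Disjoint L M) (hLN : IsCompl L N) (hMN : IsCompl M N)
    (hK : ∃ c : K, c ≠ 0 ∧ c ≠ 1) (x : V) {y z : V} (hy : y ∈ L) (hz : z ∈ M) :
    F (x + z + y) - F (x + z) = F (x + y) - F x := by
  obtain rfl | hy₀ := eq_or_ne y 0
  · simp only [add_zero, sub_self]
  obtain rfl | hz₀ := eq_or_ne z 0
  · simp only [add_zero]
  have hmemL := sub_mem
    (hL.sub_mem_span_of_parallel hM hN hF hLM hMN.disjoint hLN.codisjoint hK x hy hy₀ hy hz)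
    (hL.sub_mem_span hF x hy hy₀ hy)
  have hmemM := sub_mem
    (hM.sub_mem_span_of_parallel hL hN hF hLM.symm hLN.disjoint hMN.codisjoint hK x hz hz₀ hz hy)
    (hM.sub_mem_span hF x hz hz₀ hz)
  rw [add_right_comm, sub_sub_sub_comm] at hmemM
  exact sub_eq_zero.1
    (disjoint_def.1 (hL.disjoint_span_sub hM hF hLM x hy hy₀ hz hz₀) _ hmemL hmemM)

theorem add_sub_eq_sub_zero (hL : MapsTranslatesOntoLines K' F L)
    (hM : MapsTranslatesOntoLines K' F M) (hN : MapsTranslatesOntoLines K' F N)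
    (hF : F.Injective) (hLM : IsCompl L M) (hLN : IsCompl L N) (hMN : IsCompl M N)
    (hK : ∃ c : K, c ≠ 0 ∧ c ≠ 1) (x : V) {y : V} (hy : y ∈ L) :
    F (x + y) - F x = F y - F 0 := by
  obtain ⟨m, n, hm, hn, rfl⟩ := codisjoint_iff_exists_add_eq.1 hMN.codisjoint x
  calc F (m + n + y) - F (m + n)
    _ = F (m + y) - F m :=
      hL.parallelogram hN hM hF hLN.disjoint hLM hMN.symm hK m hy hn
    _ = F y - F 0 := by
      simpa only [zero_add] using hL.parallelogram hM hN hF hLM.disjoint hLN hMN hK 0 hy hm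

end DivisionRing

end MapsTranslatesOntoLines

theorem exists_addMonoidHom_eq_add_const_of_codisjoint [Ring K] [Module K V]
    {L M : Submodule K V} (hLM : Codisjoint L M) (hL : ∀ x, ∀ y ∈ L, F (x + y) - F x = F y - F 0)
    (hM : ∀ x, ∀ y ∈ M, F (x + y) - F x = F y - F 0) :
    ∃ (A : V →+ W) (c : W), ∀ x, F x = A x + c := by
  refine ⟨.mk' (fun x ↦ F x - F 0) fun x y ↦ ?_, F 0, fun x ↦ (sub_add_cancel _ _).symm⟩
  obtain ⟨l, m, hl, hm, rfl⟩ := codisjoint_iff_exists_add_eq.1 hLM y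
  calc F (x + (l + m)) - F 0
    _ = (F (x + l + m) - F (x + l)) + (F (x + l) - F x) + (F x - F 0) := by
      rw [← add_assoc]; abel
    _ = (F (l + m) - F l) + (F l - F 0) + (F x - F 0) := by
      rw [hM _ m hm, hL _ l hl, hM l m hm]
    _ = (F x - F 0) + (F (l + m) - F 0) := by abel

theorem affine_additive_of_three_directions_plane_general [DivisionRing K] [Module K V]
    (hK : ∃ c : K, c ≠ 0 ∧ c ≠ 1) {L : Fin 3 → Submodule K V}
    (hL : Pairwise fun i j ↦ IsCompl (L i) (L j))
    (hF : F.Injective) (hline : ∀ i, MapsTranslatesOntoLines K' F (L i)) :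
    ∃ (A : V →+ W) (c : W), ∀ x, F x = A x + c := by
  have h01 : IsCompl (L 0) (L 1) := hL (by decide)
  have h02 : IsCompl (L 0) (L 2) := hL (by decide)
  have h12 : IsCompl (L 1) (L 2) := hL (by decide)
  exact exists_addMonoidHom_eq_add_const_of_codisjoint h01.codisjoint
    (fun x _ ↦ (hline 0).add_sub_eq_sub_zero (hline 1) (hline 2) hF h01 h02 h12 hK x)
    (fun x _ ↦ (hline 1).add_sub_eq_sub_zero (hline 0) (hline 2) hF h01.symm h12 h02 hK x)

end ThreeDirections

theorem isCompl_span_singleton_of_finrank_eq_two {K V : Type*} [DivisionRing K] [AddCommGroup V]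
    [Module K V] {v w : V} (hV : Module.finrank K V = 2) (hvw : LinearIndependent K ![v, w]) :
    IsCompl (K ∙ v) (K ∙ w) := by
  have hcompl : IsCompl ({0} : Set (Fin 2)) {1} := by
    rw [show ({1} : Set (Fin 2)) = {0}ᶜ by ext i; fin_cases i <;> simp]
    exact isCompl_compl
  simpa using hvw.isCompl_span_image (hvw.span_eq_top_of_card_eq_finrank (by simp [hV])) hcompl

theorem lineThru_eq_mk' {k : ℕ} (a b : Fin k → ℝ) :
    lineThru a b = AffineSubspace.mk' a (ℝ ∙ b) := by
  ext x
  simp [lineThru, mem_span_singleton, eq_sub_iff_add_eq', eq_comm]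

theorem mapsTranslatesOntoLines_span_singleton_iff {k n : ℕ} {F : (Fin k → ℝ) → (Fin n → ℝ)}
    {v : Fin k → ℝ} :
    MapsTranslatesOntoLines ℝ F (ℝ ∙ v) ↔ ∀ a, IsLine (F '' lineThru a v) := by
  simp only [MapsTranslatesOntoLines, IsLine, lineThru_eq_mk']

/-- **Theorem (fundamental theorem in the plane with three directions).**
If `n ≥ 2`, `v₁, v₂, v₃ ∈ ℝ²` are `2`-independent, and `F : ℝ² → ℝⁿ` is an injection
mapping each line in `ℒ(v₁, v₂, v₃)` onto a line, then `F` is affine-additive. -/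
theorem affine_additive_of_three_directions_plane
    {n : ℕ} (hn : 2 ≤ n)
    (v : Fin 3 → (Fin 2 → ℝ))
    (hv : ∀ i j : Fin 3, i ≠ j → LinearIndependent ℝ ![v i, v j])
    (F : (Fin 2 → ℝ) → (Fin n → ℝ))
    (hinj : Function.Injective F)
    (honto : ∀ (i : Fin 3) (a : Fin 2 → ℝ), IsLine (F '' lineThru a (v i))) :
    ∃ (A : (Fin 2 → ℝ) → (Fin n → ℝ)) (c : Fin n → ℝ),
      (∀ x y, A (x + y) = A x + A y) ∧ ∀ x, F x = A x + c := by
  obtain ⟨A, c, hA⟩ := affine_additive_of_three_directions_plane_general ⟨2, by norm_num⟩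
    (fun i j hij ↦ isCompl_span_singleton_of_finrank_eq_two (by simp) (hv i j hij)) hinj
    (fun i ↦ mapsTranslatesOntoLines_span_singleton_iff.2 (honto i))
  exact ⟨A, c, map_add A, hA⟩
end
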